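/- Let ε : 𝔤ᶜ → 𝔤̃ᶜ be an injective homomorphism of complex semisimple Lie algebras, 𝔤 a real form of 𝔤ᶜ with conjugation σ, 𝔲 a compact form of 𝔤ᶜ with conjugation τ satisfying στ = τσ, and θ = στ. If 𝔤̃ is a real form of 𝔤̃ᶜ with ε(𝔤) ⊆ 𝔤̃, then there exist a compact form 𝔲̃ of 𝔤̃ᶜ with conjugation τ̃ and a ℂ-linear involution θ̃ of 𝔤̃ᶜ such that: (1) ε(𝔲) ⊆ 𝔲̃; (2) ε∘θ = θ̃∘ε; (3) θ̃∘τ̃ = τ̃∘θ̃; (4) there is a Cartan decomposition 𝔤̃ = 𝔨̃ ⊕ 𝔭̃ such that the restriction of θ̃ to 𝔤̃ is the corresponding Cartan involution and 𝔲̃ = 𝔨̃ ⊕ i𝔭̃. -/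

import Mathlib

/-!
Write `𝔤 = 𝔨 ⊕ 𝔭` for the decomposition into eigenspaces of `τ`, and `M(x)` for the matrix of `ad x`
in a basis of the real form `𝔤̃`, the fixed points of `σ'`. The theorem follows once that basis
satisfies two conditions:

* `M(ε x)` is skew for `x ∈ 𝔨` and symmetric for `x ∈ 𝔭`;
* the set `M(𝔤̃)` is closed under transposition.

Then `M(θ̃ x) = -M(x)ᵀ` defines a Cartan involution `θ̃` of `𝔤̃` that extends `θ`, and `τ̃ = σ' θ̃`, which
reads `M ↦ -Mᴴ`, is the conjugation of the compact form `𝔨̃ ⊕ i𝔭̃` (`exists_compact_of_transpose`).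

The first condition is the unitary trick for the representation `ad ∘ ε` of the compact form `𝔲`
(`exists_invariant_form`, `exists_compatible_basis`). No integration over the compact group is used.
For an irreducible representation `ρ`, a minimiser of `∑ ‖g⁻¹ ρ_i g‖²` over unimodular `g` makes `ρ`
skew (`exists_skew_of_irreducible`). The general case is by induction on the dimension, an invariant
subspace being split off by Whitehead's lemma, which for skew representations follows from the
properties of the Casimir operator (`whitehead`, `exists_equivariant_projection`).

For the second condition, a basis satisfying the first one is moved by a unimodular `g` that commutes
with `ad ε(𝔨)` and `ad ε(𝔭)`, which preserves the first condition. Choose `g` to minimise the norm of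
the structure tensor. The Euler–Lagrange equation, a priori valid for directions in the commutant
only, holds in all traceless directions (`functional_eq_zero`, `euler_lagrange`). Applied to
`[E, Eᵀ]` with `E` a derivation, it says that `Eᵀ` is again a derivation
(`exists_derivation_adjoint`); derivations being inner, `M(𝔤̃)` is closed under transposition
(`exists_adapted_basis`).

In both cases the existence of a minimiser is obtained by adding `δ ‖g‖²` to the functional and letting
`δ → 0` (`minimiser_or_escape`). If the minimisers escape to infinity, the Euler–Lagrange equation
shows that the range of the limiting direction `g₀ ≠ 0` is invariant (`escape_invariant`). For the
irreducible representation this is a proper nonzero invariant subspace; for the structure tensor it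
is a nonzero abelian ideal of a semisimple Lie algebra. Both are impossible.
-/

/-- An anti-involution (conjugation) of a complex Lie algebra; its fixed points form a
real form. -/
structure IsConjugation {L : Type*} [LieRing L] [LieAlgebra ℂ L] (σ : L → L) : Prop where
  map_add : ∀ x y, σ (x + y) = σ x + σ y
  map_smul : ∀ (c : ℂ) (x), σ (c • x) = (starRingEnd ℂ) c • σ x
  map_lie : ∀ x y, σ ⁅x, y⁆ = ⁅σ x, σ y⁆
  invol : ∀ x, σ (σ x) = x

/-- A conjugation is *compact* if the Killing form is negative definite on its real form
of fixed points. -/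
def IsCompactConjugation {L : Type*} [LieRing L] [LieAlgebra ℂ L] (τ : L → L) : Prop :=
  IsConjugation τ ∧ ∀ x, τ x = x → x ≠ 0 →
    (killingForm ℂ L x x).re < 0 ∧ (killingForm ℂ L x x).im = 0

set_option linter.unusedSectionVars false
set_option linter.unusedVariables false

section Preparation
open Matrix Filter Topology
universe u

/-! ### Minimisation over matrices -/

/-- The Hilbert–Schmidt (Frobenius) inner product `tr (Xᵀ Y)` of real matrices. -/
def hs {ι : Type*} [Fintype ι] (X Y : Matrix ι ι ℝ) : ℝ := trace (Xᵀ * Y)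

section Analysis
variable {ι : Type*} [Fintype ι] [DecidableEq ι]

lemma hs_eq_sum (X Y : Matrix ι ι ℝ) : hs X Y = ∑ i, ∑ j, X i j * Y i j := by
  simp only [hs, trace, diag, mul_apply, transpose_apply]
  exact Finset.sum_comm

lemma hs_self_nonneg (X : Matrix ι ι ℝ) : 0 ≤ hs X X := by
  rw [hs_eq_sum]
  exact Finset.sum_nonneg fun i _ => Finset.sum_nonneg fun j _ => mul_self_nonneg _

lemma sq_le_hs (X : Matrix ι ι ℝ) (i j : ι) : X i j ^ 2 ≤ hs X X := by
  rw [hs_eq_sum, sq]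
  refine le_trans ?_ (Finset.single_le_sum (f := fun i => ∑ j, X i j * X i j)
    (fun i _ => Finset.sum_nonneg fun j _ => mul_self_nonneg _) (Finset.mem_univ i))
  exact Finset.single_le_sum (f := fun j => X i j * X i j)
    (fun j _ => mul_self_nonneg _) (Finset.mem_univ j)

lemma abs_le_of_hs_le {X : Matrix ι ι ℝ} {C : ℝ} (h : hs X X ≤ C) (i j : ι) :
    |X i j| ≤ √C :=
  Real.abs_le_sqrt ((sq_le_hs X i j).trans h)

lemma hs_self_eq_zero {X : Matrix ι ι ℝ} (h : hs X X = 0) : X = 0 := by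
  ext i j
  have := sq_le_hs X i j
  rw [h] at this
  simpa using le_antisymm this (sq_nonneg _)

lemma continuous_hs_self : Continuous fun X : Matrix ι ι ℝ => hs X X := by
  unfold hs
  fun_prop

lemma hs_smul_self (c : ℝ) (X : Matrix ι ι ℝ) : hs (c • X) (c • X) = c ^ 2 * hs X X := by
  simp [hs, sq, mul_assoc]

lemma isCompact_hs_le (c : ℝ) : IsCompact {X : Matrix ι ι ℝ | hs X X ≤ c} := by
  have hK : IsCompact (Set.pi Set.univ fun _ : ι => Set.pi Set.univ fun _ : ι =>
      Set.Icc (-√c) (√c)) :=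
    isCompact_univ_pi fun _ => isCompact_univ_pi fun _ => isCompact_Icc
  refine IsCompact.of_isClosed_subset hK (isClosed_le continuous_hs_self continuous_const) ?_
  intro X hX i _ j _
  exact abs_le.mp (abs_le_of_hs_le hX i j)

/-- **Dichotomy for the regularised minimisation.** Let `F` be a non-negative continuous function
on a closed set `G` of matrices. The functions `F + δ ‖·‖²` have minimisers `g_δ` on `G`; as
`δ → 0` either these stay bounded along a sequence, and a limit point minimises `F`, or they
escape to infinity, in a direction `g₀`. -/
lemma minimiser_or_escape (G : Set (Matrix ι ι ℝ)) (hG : IsClosed G) (h1 : (1 : Matrix ι ι ℝ) ∈ G)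
    (F : Matrix ι ι ℝ → ℝ) (hF : ContinuousOn F G) (hF0 : ∀ g, 0 ≤ F g) :
    (∃ g ∈ G, ∀ h ∈ G, F g ≤ F h) ∨
    ∃ (δ : ℕ → ℝ) (g : ℕ → Matrix ι ι ℝ) (g₀ : Matrix ι ι ℝ) (C : ℝ),
      (∀ k, 0 < δ k) ∧ (∀ k, g k ∈ G) ∧
      (∀ k, ∀ h ∈ G, F (g k) + δ k * hs (g k) (g k) ≤ F h + δ k * hs h h) ∧
      (∀ k, F (g k) ≤ C) ∧ Tendsto (fun k => hs (g k) (g k)) atTop atTop ∧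
      Tendsto (fun k => (√(hs (g k) (g k)))⁻¹ • g k) atTop (𝓝 g₀) ∧ hs g₀ g₀ = 1 := by
  have hfc : FirstCountableTopology (Matrix ι ι ℝ) :=
    inferInstanceAs (FirstCountableTopology (ι → ι → ℝ))
  set δ : ℕ → ℝ := fun k => 1 / ((k : ℝ) + 1) with hδ
  have hδ0 : ∀ k, 0 < δ k := fun k => by positivity
  have hδ1 : ∀ k, δ k ≤ 1 := fun k => by
    rw [hδ]; simp only; rw [div_le_one (by positivity)]; linarith [(Nat.cast_nonneg k : (0:ℝ) ≤ k)]
  have hδlim : Tendsto δ atTop (𝓝 0) := tendsto_one_div_add_atTop_nhds_zero_nat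
  have hmin : ∀ k, ∃ g ∈ G, ∀ h ∈ G, F g + δ k * hs g g ≤ F h + δ k * hs h h := by
    intro k
    -- Since `F ≥ 0`, the sublevel set of `F + δ k ‖·‖²` through `1` is bounded.
    set c := (F 1 + δ k * hs (1 : Matrix ι ι ℝ) 1) / δ k with hc
    have hK : IsCompact ({X : Matrix ι ι ℝ | hs X X ≤ c} ∩ G) := (isCompact_hs_le c).inter_right hG
    have hin : ∀ h : Matrix ι ι ℝ, F h + δ k * hs h h ≤ F 1 + δ k * hs (1 : Matrix ι ι ℝ) 1 →
        hs h h ≤ c := by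
      intro h hh
      rw [hc, le_div_iff₀ (hδ0 k)]
      nlinarith [hF0 h]
    obtain ⟨g, hg, hgm⟩ := hK.exists_isMinOn (f := fun g => F g + δ k * hs g g)
      ⟨1, hin 1 le_rfl, h1⟩
      ((hF.mono Set.inter_subset_right).add
        (continuous_const.mul continuous_hs_self).continuousOn)
    refine ⟨g, hg.2, fun h hh => ?_⟩
    by_cases hle : F h + δ k * hs h h ≤ F 1 + δ k * hs (1 : Matrix ι ι ℝ) 1
    · exact hgm ⟨hin h hle, hh⟩
    · exact (hgm (a := 1) ⟨hin 1 le_rfl, h1⟩).trans (not_le.mp hle).le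
  choose g hgG hg using hmin
  have hFC : ∀ k, F (g k) ≤ F 1 + hs (1 : Matrix ι ι ℝ) 1 := by
    intro k
    have := hg k 1 h1
    nlinarith [hδ0 k, hδ1 k, hs_self_nonneg (g k), hs_self_nonneg (1 : Matrix ι ι ℝ),
      mul_nonneg (hδ0 k).le (hs_self_nonneg (g k)),
      mul_nonneg (sub_nonneg.2 (hδ1 k)) (hs_self_nonneg (1 : Matrix ι ι ℝ))]
  -- Either `‖g k‖ → ∞`, and the normalised sequence accumulates at a unit matrix, or a subsequence
  -- of `g` converges to a minimiser of `F`.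
  by_cases ht : Tendsto (fun k => hs (g k) (g k)) atTop atTop
  · right
    have hunit : ∀ᶠ k in atTop, hs ((√(hs (g k) (g k)))⁻¹ • g k)
        ((√(hs (g k) (g k)))⁻¹ • g k) = 1 := by
      filter_upwards [ht.eventually_gt_atTop 0] with k hk
      rw [hs_smul_self, inv_pow, Real.sq_sqrt hk.le, inv_mul_cancel₀ hk.ne']
    obtain ⟨g₀, -, φ, hφ, hlim⟩ := (isCompact_hs_le (ι := ι) 1).tendsto_subseq'
      (hunit.mono fun k hk => hk.le).frequently
    refine ⟨δ ∘ φ, g ∘ φ, g₀, _, fun k => hδ0 _, fun k => hgG _, fun k => hg _, fun k => hFC _,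
      ht.comp hφ.tendsto_atTop, hlim, ?_⟩
    refine tendsto_nhds_unique ((continuous_hs_self.tendsto g₀).comp hlim) ?_
    exact tendsto_const_nhds.congr' ((hφ.tendsto_atTop.eventually hunit).mono fun k hk => hk.symm)
  · left
    obtain ⟨c, hc⟩ : ∃ c, ∃ᶠ k in atTop, hs (g k) (g k) ≤ c := by
      rw [tendsto_atTop] at ht
      push Not at ht
      obtain ⟨c, hc⟩ := ht
      exact ⟨c, hc.mono fun k hk => hk.le⟩
    obtain ⟨g₀, ⟨-, hg₀⟩, φ, hφ, hlim⟩ := ((isCompact_hs_le c).inter_right hG).tendsto_subseq'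
      (hc.mono fun k hk => ⟨hk, hgG k⟩)
    refine ⟨g₀, hg₀, fun h hh => ?_⟩
    have hl : Tendsto (fun k => F (g (φ k))) atTop (𝓝 (F g₀)) :=
      (hF g₀ hg₀).tendsto.comp (tendsto_nhdsWithin_iff.2 ⟨hlim, Eventually.of_forall fun k => hgG _⟩)
    have hr : Tendsto (fun k => F h + δ (φ k) * hs h h) atTop (𝓝 (F h + 0 * hs h h)) :=
      ((hδlim.comp hφ.tendsto_atTop).mul_const _).const_add _
    have := le_of_tendsto_of_tendsto' hl hr fun k => by
      have := hg (φ k) h hh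
      have := mul_nonneg (hδ0 (φ k)).le (hs_self_nonneg (g (φ k)))
      linarith
    simpa using this

/-- A vector orthogonal to the kernel of a self-adjoint operator lies in its range. The inner
product is given as a symmetric positive definite bilinear form. -/
lemma mem_range_of_symm {E : Type*} [AddCommGroup E] [Module ℝ E] [FiniteDimensional ℝ E]
    (B : E →ₗ[ℝ] E →ₗ[ℝ] ℝ) (hB : ∀ x y, B x y = B y x) (hpos : ∀ x, x ≠ 0 → 0 < B x x)
    (T : E →ₗ[ℝ] E) (hT : ∀ x y, B (T x) y = B x (T y)) (d : E)
    (hd : ∀ z, T z = 0 → B d z = 0) : ∃ x, T x = d := by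
  have hdis : Disjoint (LinearMap.range T) (LinearMap.ker T) := by
    rw [Submodule.disjoint_def]
    rintro _ ⟨y, rfl⟩ hy
    by_contra hne
    have := hpos _ hne
    rw [hT, LinearMap.mem_ker.1 hy, map_zero] at this
    exact lt_irrefl _ this
  have htop : LinearMap.range T ⊔ LinearMap.ker T = ⊤ := by
    apply Submodule.eq_top_of_disjoint _ _ (LinearMap.finrank_range_add_finrank_ker T).ge hdis
  obtain ⟨_, ⟨x, rfl⟩, z, hz, hxz⟩ := Submodule.mem_sup.1 (htop ▸ Submodule.mem_top : d ∈ _)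
  have h1 := hd z hz
  rw [← hxz, map_add, LinearMap.add_apply, hT, LinearMap.mem_ker.1 hz, map_zero, zero_add] at h1
  have hz0 : z = 0 := by
    by_contra hne
    exact (hpos z hne).ne' h1
  exact ⟨x, by rw [← hxz, hz0, add_zero]⟩

/-- The range of `g` is the orthogonal complement of the kernel of `gᵀ`. -/
lemma exists_mulVec_of_orthogonal (g : Matrix ι ι ℝ) (y : ι → ℝ)
    (h : ∀ w, gᵀ *ᵥ w = 0 → y ⬝ᵥ w = 0) : ∃ v, g *ᵥ v = y := by
  obtain ⟨x, hx⟩ := mem_range_of_symm (dotProductBilin ℝ ℝ) (fun x y => dotProduct_comm x y)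
    (fun x hx => by
      have := dotProduct_self_eq_zero.not.2 hx
      exact lt_of_le_of_ne (Finset.sum_nonneg fun i _ => mul_self_nonneg _) (Ne.symm this))
    (g * gᵀ).mulVecLin (fun x y => by
      change ((g * gᵀ) *ᵥ x) ⬝ᵥ y = x ⬝ᵥ ((g * gᵀ) *ᵥ y)
      rw [dotProduct_mulVec, ← mulVec_transpose]; simp) y (fun z hz => h z (by
      have h2 : (gᵀ *ᵥ z) ⬝ᵥ (gᵀ *ᵥ z) = 0 := by
        rw [dotProduct_mulVec, vecMul_transpose, mulVec_mulVec]
        rw [mulVecLin_apply] at hz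
        rw [hz, zero_dotProduct]
      exact dotProduct_self_eq_zero.1 h2))
  exact ⟨gᵀ *ᵥ x, by rw [mulVec_mulVec]; exact hx⟩

/-- If the minimisers escape in the direction `g₀`, then the range of `g₀` is invariant under every
`D` whose conjugates `D_k = g_k⁻¹ D g_k` satisfy `tr (g_kᵀ g_k [D_k, D_kᵀ]) ≥ 0`. Indeed this
inequality bounds `X_k = g̃_k⁻¹ D g̃_k g̃_kᵀ`, where `g̃_k` is `g_k` normalised, and
`D g̃_k g̃_kᵀ = g̃_k X_k`. -/
lemma escape_invariant (g : ℕ → Matrix ι ι ℝ) (g₀ : Matrix ι ι ℝ) (hdet : ∀ k, (g k).det = 1)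
    (hlim : Tendsto (fun k => (√(hs (g k) (g k)))⁻¹ • g k) atTop (𝓝 g₀))
    (D : Matrix ι ι ℝ)
    (hD : ∀ k, 0 ≤ trace ((g k)ᵀ * g k * (((g k)⁻¹ * D * g k) * ((g k)⁻¹ * D * g k)ᵀ
      - ((g k)⁻¹ * D * g k)ᵀ * ((g k)⁻¹ * D * g k)))) (v : ι → ℝ) :
    ∃ w, g₀ *ᵥ w = D *ᵥ (g₀ *ᵥ v) := by
  set s : ℕ → ℝ := fun k => √(hs (g k) (g k)) with hs_def
  set γ : ℕ → Matrix ι ι ℝ := fun k => (s k)⁻¹ • g k with hγ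
  set X : ℕ → Matrix ι ι ℝ := fun k => (s k)⁻¹ • ((g k)⁻¹ * D * g k * (g k)ᵀ) with hX
  have hu : ∀ k, IsUnit (g k).det := fun k => by rw [hdet k]; exact isUnit_one
  -- Up to the normalisation `s k`, the hypothesis `hD` reads `‖X k‖² ≤ ‖D (γ k)‖²`: the two terms
  -- of the trace are computed in `e1` and `e2`.
  have hXle : ∀ k, hs (X k) (X k) ≤ hs (D * γ k) (D * γ k) := by
    intro k
    rw [hX, hγ]
    simp only [Matrix.mul_smul]
    rw [hs_smul_self, hs_smul_self]
    refine mul_le_mul_of_nonneg_left ?_ (sq_nonneg _)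
    have := hD k
    rw [Matrix.mul_sub, trace_sub, sub_nonneg] at this
    have hgg : g k * (g k)⁻¹ = 1 := mul_nonsing_inv _ (hu k)
    have e1 : trace ((g k)ᵀ * g k * (((g k)⁻¹ * D * g k) * ((g k)⁻¹ * D * g k)ᵀ))
        = hs (D * g k) (D * g k) := by
      have hgt : ((g k)⁻¹)ᵀ * (g k)ᵀ = 1 := by
        rw [← transpose_mul, hgg, transpose_one]
      rw [hs, trace_mul_comm, trace_mul_comm (D * g k)ᵀ]
      have : (g k)⁻¹ * D * g k * ((g k)⁻¹ * D * g k)ᵀ * ((g k)ᵀ * g k)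
          = (g k)⁻¹ * (D * g k * (g k)ᵀ * Dᵀ * (((g k)⁻¹)ᵀ * (g k)ᵀ) * g k) := by
        simp only [transpose_mul, Matrix.mul_assoc]
      rw [this, hgt, trace_mul_comm, Matrix.mul_assoc, Matrix.mul_assoc, hgg]
      simp [transpose_mul, Matrix.mul_assoc]
    have e2 : trace ((g k)ᵀ * g k * (((g k)⁻¹ * D * g k)ᵀ * ((g k)⁻¹ * D * g k)))
        = hs ((g k)⁻¹ * D * g k * (g k)ᵀ) ((g k)⁻¹ * D * g k * (g k)ᵀ) := by
      generalize (g k)⁻¹ * D * g k = Y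
      rw [hs, transpose_mul, transpose_transpose, Matrix.mul_assoc (g k), trace_mul_comm (g k),
        trace_mul_comm]
      simp only [Matrix.mul_assoc]
    rw [← e1, ← e2]; exact this
  have hDγ : Tendsto (fun k => hs (D * γ k) (D * γ k)) atTop (𝓝 (hs (D * g₀) (D * g₀))) :=
    (continuous_hs_self.comp (continuous_const.matrix_mul continuous_id)).tendsto g₀ |>.comp hlim
  obtain ⟨C, hC⟩ := hDγ.bddAbove_range
  have hXb : ∀ k i j, |X k i j| ≤ √C := fun k i j =>
    abs_le_of_hs_le ((hXle k).trans (hC ⟨k, rfl⟩)) i j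
  have hfac : ∀ k, D * γ k * (γ k)ᵀ = γ k * X k := by
    intro k
    rw [hγ, hX]
    simp only [Matrix.mul_smul, Matrix.smul_mul, transpose_smul]
    rw [Matrix.mul_assoc (g k)⁻¹, Matrix.mul_assoc (g k)⁻¹,
      mul_nonsing_inv_cancel_left _ _ (hu k)]
  -- In the limit of `D γ γᵀ = γ X` with `X` bounded: a vector orthogonal to the range of `g₀` is
  -- orthogonal to the range of `D g₀ g₀ᵀ`,
  have key : ∀ w, g₀ᵀ *ᵥ w = 0 → (D * g₀ * g₀ᵀ)ᵀ *ᵥ w = 0 := by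
    intro w hw
    have l1 : Tendsto (fun k => (D * γ k * (γ k)ᵀ)ᵀ *ᵥ w) atTop (𝓝 ((D * g₀ * g₀ᵀ)ᵀ *ᵥ w)) := by
      have : Continuous fun Y : Matrix ι ι ℝ => (D * Y * Yᵀ)ᵀ *ᵥ w := by fun_prop
      exact (this.tendsto g₀).comp hlim
    have l2 : Tendsto (fun k => (γ k)ᵀ *ᵥ w) atTop (𝓝 (g₀ᵀ *ᵥ w)) := by
      have : Continuous fun Y : Matrix ι ι ℝ => Yᵀ *ᵥ w := by fun_prop
      exact (this.tendsto g₀).comp hlim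
    rw [hw] at l2
    refine tendsto_nhds_unique l1 ?_
    have : (fun k => (D * γ k * (γ k)ᵀ)ᵀ *ᵥ w) = fun k => (X k)ᵀ *ᵥ ((γ k)ᵀ *ᵥ w) := by
      funext k
      rw [hfac, transpose_mul, mulVec_mulVec]
    rw [this, tendsto_pi_nhds]
    intro i
    simp only [mulVec, dotProduct, Pi.zero_apply]
    rw [← Finset.sum_const_zero (s := (Finset.univ : Finset ι))]
    refine tendsto_finsetSum _ fun j _ => ?_
    have l3 := tendsto_pi_nhds.1 l2 j
    refine bdd_le_mul_tendsto_zero' (√C) (Eventually.of_forall fun k => hXb k j i) ?_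
    exact l3
  -- hence to that of `D g₀`, because `g₀ g₀ᵀ` and `g₀` have the same range.
  apply exists_mulVec_of_orthogonal
  intro w hw
  have h1 := key w hw
  have h2 : ((D * g₀)ᵀ *ᵥ w) ⬝ᵥ ((D * g₀)ᵀ *ᵥ w) = 0 := by
    rw [dotProduct_mulVec, vecMul_transpose]
    have : (D * g₀) *ᵥ ((D * g₀)ᵀ *ᵥ w) = D *ᵥ ((D * g₀ * g₀ᵀ)ᵀ *ᵥ w) := by
      simp only [mulVec_mulVec, transpose_mul, transpose_transpose, Matrix.mul_assoc]
    rw [this, h1, mulVec_zero, zero_dotProduct]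
  have h3 := dotProduct_self_eq_zero.1 h2
  rw [mulVec_mulVec, dotProduct_comm, dotProduct_mulVec, ← mulVec_transpose, h3, zero_dotProduct]

/-- Entrywise differentiability at `0` of a path of matrices, with derivative `Y'`. Working with
entries avoids fixing a norm on matrices. -/
def HasEntryDeriv (Y : ℝ → Matrix ι ι ℝ) (Y' : Matrix ι ι ℝ) : Prop :=
  ∀ i j, HasDerivAt (fun t => Y t i j) (Y' i j) 0

lemma HasEntryDeriv.mul {Y Z : ℝ → Matrix ι ι ℝ} {Y' Z' : Matrix ι ι ℝ}
    (hY : HasEntryDeriv Y Y') (hZ : HasEntryDeriv Z Z') :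
    HasEntryDeriv (fun t => Y t * Z t) (Y' * Z 0 + Y 0 * Z') := by
  intro i j
  simp only [Matrix.mul_apply, Matrix.add_apply]
  rw [← Finset.sum_add_distrib]
  exact HasDerivAt.fun_sum fun k _ => (hY i k).mul (hZ k j)

lemma hasEntryDeriv_const (X : Matrix ι ι ℝ) : HasEntryDeriv (fun _ => X) 0 :=
  fun i j => hasDerivAt_const _ (X i j)

lemma HasEntryDeriv.sum_smul {κ : Type*} [Fintype κ] {c : ℝ → κ → ℝ} {c' : κ → ℝ}
    (hc : ∀ k, HasDerivAt (fun t => c t k) (c' k) 0) (X : κ → Matrix ι ι ℝ) :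
    HasEntryDeriv (fun t => ∑ k, c t k • X k) (∑ k, c' k • X k) := by
  intro i j
  simp only [Matrix.sum_apply, Matrix.smul_apply, smul_eq_mul]
  exact HasDerivAt.fun_sum fun k _ => (hc k).mul_const _

lemma HasEntryDeriv.hs_self {Y : ℝ → Matrix ι ι ℝ} {Y' : Matrix ι ι ℝ}
    (hY : HasEntryDeriv Y Y') : HasDerivAt (fun t => hs (Y t) (Y t)) (2 * hs (Y 0) Y') 0 := by
  simp only [hs_eq_sum, Finset.mul_sum]
  refine HasDerivAt.fun_sum fun i _ => HasDerivAt.fun_sum fun j _ => ?_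
  convert! (hY i j).mul (hY i j) using 1
  ring

section
attribute [local instance] Matrix.linftyOpNormedRing Matrix.linftyOpNormedAlgebra

lemma hasEntryDeriv_exp (A : Matrix ι ι ℝ) :
    HasEntryDeriv (fun t : ℝ => NormedSpace.exp (t • A)) A := by
  intro i j
  have h := hasDerivAt_exp_smul_const (𝕂 := ℝ) A (0 : ℝ)
  rw [zero_smul, NormedSpace.exp_zero, one_mul] at h
  exact (LinearMap.toContinuousLinearMap
    (Matrix.entryLinearMap ℝ ℝ i j)).hasFDerivAt.comp_hasDerivAt (0 : ℝ) h

end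

lemma hasEntryDeriv_exp_neg (A : Matrix ι ι ℝ) :
    HasEntryDeriv (fun t : ℝ => (NormedSpace.exp (t • A))⁻¹) (-A) := by
  have := hasEntryDeriv_exp (-A)
  simpa only [smul_neg, Matrix.exp_neg] using this

/-- `det (exp (t A)) = 1` for traceless `A`: the function `t ↦ det (exp (t A))` is a one-parameter
group whose derivative at `0` is `tr A`. -/
lemma det_exp_smul_of_trace_eq_zero (A : Matrix ι ι ℝ) (hA : trace A = 0) (t : ℝ) :
    (NormedSpace.exp (t • A)).det = 1 := by
  have hdiff : Differentiable ℝ fun X : ι → ι → ℝ => (Matrix.of X).det := by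
    simp only [det_apply, of_apply]
    fun_prop
  have hchain : ∀ Y : ℝ → Matrix ι ι ℝ, Y 0 = 1 → HasEntryDeriv Y A →
      HasDerivAt (fun s => (Y s).det)
        (fderiv ℝ (fun X : ι → ι → ℝ => (Matrix.of X).det) (1 : Matrix ι ι ℝ) A) 0 := by
    intro Y h0 hY
    have hY' : HasDerivAt (fun s => (fun i j => Y s i j : ι → ι → ℝ)) (fun i j => A i j) 0 :=
      hasDerivAt_pi.2 fun i => hasDerivAt_pi.2 fun j => hY i j
    exact (hdiff _).hasFDerivAt.comp_hasDerivAt_of_eq (0 : ℝ) hY' h0.symm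
  -- The derivative at `0` of `det` along `exp (s A)` equals the one along the line `1 + s A`, where
  -- the determinant is a polynomial in `s` with linear coefficient `tr A`.
  have h1 : HasDerivAt (fun s : ℝ => (1 + s • A).det) 0 0 := by
    have hpoly : ∀ s : ℝ, (1 + s • A).det =
        (det (1 + (Polynomial.X : Polynomial ℝ) • A.map Polynomial.C)).eval s := by
      intro s
      rw [← Polynomial.coe_evalRingHom, RingHom.map_det]
      congr 1
      ext i j
      rcases eq_or_ne i j with rfl | hij
      · simp [mul_comm s]
      · simp [hij, mul_comm s]
    simp only [hpoly]
    have := (det (1 + (Polynomial.X : Polynomial ℝ) • A.map Polynomial.C)).hasDerivAt 0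
    rwa [derivative_det_one_add_X_smul, hA] at this
  have h2 : HasEntryDeriv (fun s : ℝ => 1 + s • A) A := by
    intro i j
    simpa using ((hasDerivAt_id (0 : ℝ)).mul_const (A i j)).const_add ((1 : Matrix ι ι ℝ) i j)
  have h4 : HasDerivAt (fun s : ℝ => (NormedSpace.exp (s • A)).det) 0 0 := by
    have e0 := h1.unique (hchain _ (by simp) h2)
    have := hchain _ (by simp) (hasEntryDeriv_exp A)
    rwa [← e0] at this
  -- The vanishing of the derivative propagates from `0` to every `t` by the group law.
  have h5 : ∀ t, HasDerivAt (fun s : ℝ => (NormedSpace.exp (s • A)).det) 0 t := by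
    intro t
    have e : (fun s : ℝ => (NormedSpace.exp (s • A)).det) =
        fun s => (NormedSpace.exp (t • A)).det * (NormedSpace.exp ((s - t) • A)).det := by
      funext s
      rw [← det_mul, ← Matrix.exp_add_of_commute, ← add_smul]
      · simp
      · exact ((Commute.refl A).smul_left _).smul_right _
    rw [e]
    have h6 : HasDerivAt (fun s : ℝ => (NormedSpace.exp ((s - t) • A)).det) 0 t := by
      have h4' : HasDerivAt (fun s : ℝ => (NormedSpace.exp (s • A)).det) 0 (t - t) := by
        rwa [sub_self]
      exact h4'.comp_sub_const t t
    simpa using h6.const_mul (NormedSpace.exp (t • A)).det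
  have := is_const_of_deriv_eq_zero (fun t => (h5 t).differentiableAt) (fun t => (h5 t).deriv) t 0
  simpa using this

end Analysis

/-! ### Structure tensors -/

section Tensors
variable {ι : Type*} [Fintype ι] [DecidableEq ι]

/-- The substitution `X_i ↦ ∑_j A_{ji} X_j` on tuples of matrices, i.e. `X` as a linear function
precomposed with `A`. -/
def tw (A : Matrix ι ι ℝ) (X : ι → Matrix ι ι ℝ) : ι → Matrix ι ι ℝ := fun i => ∑ j, A j i • X j

/-- The infinitesimal action of a matrix `A` on structure tensors. If `X_i` is the matrix of
`ad b_i` in a basis `b` of a Lie algebra, then `der A X = 0` says that `A` is a derivation. -/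
def der (A : Matrix ι ι ℝ) (X : ι → Matrix ι ι ℝ) : ι → Matrix ι ι ℝ :=
  fun i => A * X i - X i * A - tw A X i

/-- The action of an invertible matrix on structure tensors by change of basis. -/
noncomputable def act (g : Matrix ι ι ℝ) (X : ι → Matrix ι ι ℝ) : ι → Matrix ι ι ℝ :=
  fun i => g⁻¹ * tw g X i * g

/-- The Euclidean inner product of structure tensors. -/
def ipf (X Y : ι → Matrix ι ι ℝ) : ℝ := ∑ i, hs (X i) (Y i)

lemma tw_mul (g h : Matrix ι ι ℝ) (X : ι → Matrix ι ι ℝ) : tw (g * h) X = tw h (tw g X) := by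
  funext i
  simp only [tw, Matrix.mul_apply, Finset.sum_smul, Finset.smul_sum]
  rw [Finset.sum_comm]
  refine Finset.sum_congr rfl fun j _ => Finset.sum_congr rfl fun k _ => ?_
  rw [smul_smul, mul_comm]

lemma tw_conj (A P Q : Matrix ι ι ℝ) (X : ι → Matrix ι ι ℝ) (i : ι) :
    tw A (fun j => P * X j * Q) i = P * tw A X i * Q := by
  simp only [tw, Finset.mul_sum, Finset.sum_mul, Matrix.mul_smul, Matrix.smul_mul]

lemma tw_left (A P : Matrix ι ι ℝ) (X : ι → Matrix ι ι ℝ) (i : ι) :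
    tw A (fun j => P * X j) i = P * tw A X i := by
  simp only [tw, Finset.mul_sum, Matrix.mul_smul]

lemma tw_right (A Q : Matrix ι ι ℝ) (X : ι → Matrix ι ι ℝ) (i : ι) :
    tw A (fun j => X j * Q) i = tw A X i * Q := by
  simp only [tw, Finset.sum_mul, Matrix.smul_mul]

lemma tw_sub (A : Matrix ι ι ℝ) (X Y : ι → Matrix ι ι ℝ) (i : ι) :
    tw A (fun j => X j - Y j) i = tw A X i - tw A Y i := by
  simp only [tw, smul_sub, Finset.sum_sub_distrib]

lemma sub_tw (A B : Matrix ι ι ℝ) (X : ι → Matrix ι ι ℝ) (i : ι) :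
    tw (A - B) X i = tw A X i - tw B X i := by
  simp only [tw, Matrix.sub_apply, sub_smul, Finset.sum_sub_distrib]

lemma tw_one (X : ι → Matrix ι ι ℝ) : tw 1 X = X := by
  funext i
  simp [tw, Matrix.one_apply]

lemma der_add (A B : Matrix ι ι ℝ) (X : ι → Matrix ι ι ℝ) : der (A + B) X = der A X + der B X := by
  funext i
  simp only [der, tw, Pi.add_apply, Matrix.add_apply, add_smul, Finset.sum_add_distrib,
    Matrix.add_mul, Matrix.mul_add]
  abel

lemma der_smul (c : ℝ) (A : Matrix ι ι ℝ) (X : ι → Matrix ι ι ℝ) :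
    der (c • A) X = c • der A X := by
  funext i
  simp only [der, tw, Pi.smul_apply, Matrix.smul_apply, smul_sub, Finset.smul_sum, smul_smul,
    Matrix.smul_mul, Matrix.mul_smul, smul_eq_mul]

lemma der_neg (A : Matrix ι ι ℝ) (X : ι → Matrix ι ι ℝ) : der (-A) X = -der A X := by
  simpa using der_smul (-1) A X

lemma der_zero (A : Matrix ι ι ℝ) : der A (0 : ι → Matrix ι ι ℝ) = 0 := by
  funext i
  simp [der, tw]

lemma act_zero (g : Matrix ι ι ℝ) : act g (0 : ι → Matrix ι ι ℝ) = 0 := by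
  funext i
  simp [act, tw]

/-- `der` is a representation of the Lie algebra of matrices on structure tensors. -/
lemma der_lie (A B : Matrix ι ι ℝ) (X : ι → Matrix ι ι ℝ) :
    der (A * B - B * A) X = der A (der B X) - der B (der A X) := by
  funext i
  have h : ∀ A B : Matrix ι ι ℝ, der A (der B X) i =
      A * (B * X i - X i * B - tw B X i) - (B * X i - X i * B - tw B X i) * A
        - (B * tw A X i - tw A X i * B - tw (B * A) X i) := by
    intro A B
    have : der B X = fun j => (B * X j - X j * B) - tw B X j := rfl
    rw [tw_mul]
    rw [this, der, tw_sub, tw_sub A (fun j => B * X j) (fun j => X j * B), tw_left, tw_right]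
  rw [Pi.sub_apply, h, h, der, sub_tw]
  noncomm_ring

lemma hs_comm (X Y : Matrix ι ι ℝ) : hs X Y = hs Y X := by
  simp only [hs_eq_sum, mul_comm]

lemma ipf_comm (X Y : ι → Matrix ι ι ℝ) : ipf X Y = ipf Y X := by
  simp only [ipf, hs_comm]

lemma ipf_self_nonneg (X : ι → Matrix ι ι ℝ) : 0 ≤ ipf X X :=
  Finset.sum_nonneg fun i _ => hs_self_nonneg _

lemma ipf_self_eq_zero {X : ι → Matrix ι ι ℝ} (h : ipf X X = 0) : X = 0 := by
  funext i
  exact hs_self_eq_zero ((Finset.sum_eq_zero_iff_of_nonneg fun i _ => hs_self_nonneg (X i)).1 h i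
    (Finset.mem_univ i))

lemma ipf_add_right (X Y Z : ι → Matrix ι ι ℝ) : ipf X (Y + Z) = ipf X Y + ipf X Z := by
  simp [ipf, hs, Matrix.mul_add, Finset.sum_add_distrib]

lemma ipf_sub_right (X Y Z : ι → Matrix ι ι ℝ) : ipf X (Y - Z) = ipf X Y - ipf X Z := by
  simp [ipf, hs, Matrix.mul_sub, Finset.sum_sub_distrib]

lemma ipf_smul_right (c : ℝ) (X Y : ι → Matrix ι ι ℝ) : ipf X (c • Y) = c * ipf X Y := by
  simp [ipf, hs, Finset.mul_sum]

lemma ipf_zero_right (X : ι → Matrix ι ι ℝ) : ipf X 0 = 0 := by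
  simp [ipf, hs]

/-- The operator `der Aᵀ` is the adjoint of `der A`. -/
lemma ipf_der (A : Matrix ι ι ℝ) (X Y : ι → Matrix ι ι ℝ) :
    ipf (der A X) Y = ipf X (der Aᵀ Y) := by
  have h1 : ∀ i, hs (der A X i) (Y i) =
      hs (X i) (Aᵀ * Y i) - hs (X i) (Y i * Aᵀ) - ∑ j, A j i * hs (X j) (Y i) := by
    intro i
    simp only [der, tw, hs, transpose_sub, transpose_mul, transpose_sum, transpose_smul,
      Matrix.sub_mul, trace_sub, Matrix.sum_mul, trace_sum, Matrix.smul_mul, trace_smul,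
      smul_eq_mul, Matrix.mul_assoc]
    rw [trace_mul_comm Aᵀ, Matrix.mul_assoc]
  have h2 : ∀ i, hs (X i) (der Aᵀ Y i) =
      hs (X i) (Aᵀ * Y i) - hs (X i) (Y i * Aᵀ) - ∑ j, A i j * hs (X i) (Y j) := by
    intro i
    simp only [der, tw, hs, Matrix.mul_sub, trace_sub, Finset.mul_sum, trace_sum,
      Matrix.mul_smul, trace_smul, smul_eq_mul, transpose_apply]
  simp only [ipf, h1, h2, Finset.sum_sub_distrib]
  rw [Finset.sum_comm]

lemma act_mul (g h : Matrix ι ι ℝ) (X : ι → Matrix ι ι ℝ) : act (g * h) X = act h (act g X) := by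
  funext i
  have : act g X = fun j => g⁻¹ * tw g X j * g := rfl
  rw [act, this, act, tw_conj, Matrix.mul_inv_rev, tw_mul]
  simp only [Matrix.mul_assoc]

lemma act_one (X : ι → Matrix ι ι ℝ) : act 1 X = X := by
  funext i
  simp [act, tw_one]

/-- Changing the basis by `g` conjugates derivations by `g`. -/
lemma der_act (g D : Matrix ι ι ℝ) (hg : g.det = 1) (X : ι → Matrix ι ι ℝ) :
    der (g⁻¹ * D * g) (act g X) = act g (der D X) := by
  have hu : IsUnit g.det := by rw [hg]; exact isUnit_one
  funext i
  have e1 : act g X = fun j => g⁻¹ * tw g X j * g := rfl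
  have e2 : der D X = fun j => (D * X j - X j * D) - tw D X j := rfl
  rw [e1, e2, der, act, tw_conj, tw_sub, tw_sub g (fun j => D * X j) (fun j => X j * D), tw_left,
    tw_right, ← tw_mul, ← tw_mul]
  rw [Matrix.mul_assoc g⁻¹ D g, mul_nonsing_inv_cancel_left _ _ hu]
  simp only [Matrix.mul_sub, Matrix.sub_mul, Matrix.mul_assoc, mul_nonsing_inv_cancel_left _ _ hu]

/-- A linear functional that vanishes on the commutators `[s, A]`, `s ∈ S`, and on the traceless
matrices commuting with `S`, vanishes on all traceless matrices: it is `A ↦ tr (M A)` where `M`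
commutes with `S`, and its restriction to the commutant of `S` forces `M` to be scalar. -/
lemma functional_eq_zero (S : Set (Matrix ι ι ℝ)) (hS : ∀ s ∈ S, sᵀ = s ∨ sᵀ = -s)
    (l : Matrix ι ι ℝ →ₗ[ℝ] ℝ) (h1 : ∀ s ∈ S, ∀ A, l (s * A - A * s) = 0)
    (h2 : ∀ A, trace A = 0 → (∀ s ∈ S, s * A = A * s) → l A = 0) (A : Matrix ι ι ℝ)
    (hA : trace A = 0) : l A = 0 := by
  -- The matrix `M` representing `l` commutes with `S`, and so does `Mᵀ`, as `S` consists of symmetric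
  -- and skew matrices. The traceless part of `Mᵀ` is then a legitimate argument in `h2`, which shows
  -- that it is orthogonal to itself.
  set M : Matrix ι ι ℝ := of fun i j => l (Matrix.single j i 1) with hM
  have hl : ∀ A, l A = trace (M * A) := by
    intro A
    conv_lhs => rw [matrix_eq_sum_single A]
    simp only [map_sum, trace, diag, Matrix.mul_apply, hM, of_apply]
    rw [Finset.sum_comm]
    refine Finset.sum_congr rfl fun i _ => Finset.sum_congr rfl fun j _ => ?_
    have : Matrix.single j i (A j i) = A j i • Matrix.single j i (1 : ℝ) := by
      simp [Matrix.smul_single]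
    rw [this, map_smul, smul_eq_mul, mul_comm]
  have hMs : ∀ s ∈ S, s * M = M * s := by
    intro s hs'
    have : ∀ A, trace ((M * s - s * M) * A) = 0 := by
      intro A
      have := h1 s hs' A
      rw [hl, Matrix.mul_sub, trace_sub] at this
      rw [Matrix.sub_mul, trace_sub, Matrix.mul_assoc s, trace_mul_comm s, Matrix.mul_assoc,
        Matrix.mul_assoc, this]
    have h0 : hs (M * s - s * M)ᵀ (M * s - s * M)ᵀ = 0 := by
      rw [hs, transpose_transpose, this]
    have := hs_self_eq_zero h0
    rw [transpose_eq_zero, sub_eq_zero] at this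
    exact this.symm
  have hMt : ∀ s ∈ S, s * Mᵀ = Mᵀ * s := by
    intro s hs'
    have h := congrArg transpose (hMs s hs')
    simp only [transpose_mul] at h
    rcases hS s hs' with e | e <;> rw [e] at h
    · exact h.symm
    · simpa using h.symm
  set c : ℝ := trace M / Fintype.card ι with hc
  have htr : trace (Mᵀ - c • (1 : Matrix ι ι ℝ)) = 0 := by
    rw [trace_sub, trace_transpose, trace_smul, trace_one, smul_eq_mul, hc]
    rcases isEmpty_or_nonempty ι with h | h
    · simp [trace]
    · rw [div_mul_cancel₀ _ (by simp), sub_self]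
  have h0 := h2 _ htr fun s hs' => by
    rw [Matrix.mul_sub, Matrix.sub_mul, hMt s hs']; simp
  rw [hl] at h0
  have hz : Mᵀ - c • (1 : Matrix ι ι ℝ) = 0 := by
    apply hs_self_eq_zero
    rw [hs, transpose_sub, transpose_transpose, Matrix.sub_mul, trace_sub, h0]
    simp only [transpose_smul, transpose_one, Matrix.smul_mul, Matrix.one_mul, trace_smul, htr]
    simp
  have hM' : M = c • 1 := by
    rw [← transpose_transpose M, sub_eq_zero.1 hz]; simp
  rw [hl, hM']
  simp [hA]

lemma hasDerivAt_ipf_act (A : Matrix ι ι ℝ) (X : ι → Matrix ι ι ℝ) :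
    HasDerivAt (fun t : ℝ => ipf (act (NormedSpace.exp (t • A)) X)
      (act (NormedSpace.exp (t • A)) X)) (-2 * ipf X (der A X)) 0 := by
  have h : ∀ i, HasEntryDeriv (fun t : ℝ => act (NormedSpace.exp (t • A)) X i) (-der A X i) := by
    intro i
    have h1 : HasEntryDeriv (fun t : ℝ => tw (NormedSpace.exp (t • A)) X i) (tw A X i) :=
      HasEntryDeriv.sum_smul (fun j => hasEntryDeriv_exp A j i) X
    have h2 := ((hasEntryDeriv_exp_neg A).mul h1).mul (hasEntryDeriv_exp A)
    convert! h2 using 1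
    simp [tw_one, der]
    noncomm_ring
  have : HasDerivAt (fun t : ℝ => ipf (act (NormedSpace.exp (t • A)) X)
      (act (NormedSpace.exp (t • A)) X)) (∑ i, 2 * hs (X i) (-der A X i)) 0 := by
    unfold ipf
    refine HasDerivAt.fun_sum fun i _ => ?_
    have := (h i).hs_self
    simpa [act_one] using this
  convert! this using 1
  simp [ipf, Finset.mul_sum, hs]

lemma hasDerivAt_hs_mul_exp (g A : Matrix ι ι ℝ) :
    HasDerivAt (fun t : ℝ => hs (g * NormedSpace.exp (t • A)) (g * NormedSpace.exp (t • A)))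
      (2 * hs g (g * A)) 0 := by
  have := ((hasEntryDeriv_const g).mul (hasEntryDeriv_exp A)).hs_self
  simpa using this

lemma commute_exp {s A : Matrix ι ι ℝ} (h : s * A = A * s) (t : ℝ) :
    s * NormedSpace.exp (t • A) = NormedSpace.exp (t • A) * s := by
  have : Commute s (t • A) := Commute.smul_right h t
  exact this.exp_right

/-- The Euler–Lagrange equation at a minimiser `g` of `‖g·Φ‖² + δ ‖g‖²` on the unimodular matrices
commuting with `S`. By `functional_eq_zero` it holds in all traceless directions, not only those
commuting with `S`. -/
lemma euler_lagrange (Φ : ι → Matrix ι ι ℝ) (S : Set (Matrix ι ι ℝ))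
    (hS : ∀ s ∈ S, sᵀ = s ∨ sᵀ = -s) (hSd : ∀ s ∈ S, der s Φ = 0) (δ : ℝ) (g : Matrix ι ι ℝ)
    (hg : g.det = 1) (hgS : ∀ s ∈ S, s * g = g * s)
    (hmin : ∀ h : Matrix ι ι ℝ, h.det = 1 → (∀ s ∈ S, s * h = h * s) →
      ipf (act g Φ) (act g Φ) + δ * hs g g ≤ ipf (act h Φ) (act h Φ) + δ * hs h h)
    (A : Matrix ι ι ℝ) (hA : trace A = 0) :
    ipf (act g Φ) (der A (act g Φ)) = δ * hs g (g * A) := by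
  set Ψ := act g Φ with hΨ
  have hu : IsUnit g.det := by rw [hg]; exact isUnit_one
  let l : Matrix ι ι ℝ →ₗ[ℝ] ℝ :=
    { toFun := fun A => ipf Ψ (der A Ψ) - δ * hs g (g * A)
      map_add' := fun A B => by
        simp only [der_add, ipf_add_right, Matrix.mul_add, hs, trace_add]
        ring
      map_smul' := fun c A => by
        simp only [der_smul, ipf_smul_right, Matrix.mul_smul, hs, trace_smul, RingHom.id_apply,
          smul_eq_mul]
        ring }
  have hl : ∀ A, l A = ipf Ψ (der A Ψ) - δ * hs g (g * A) := fun _ => rfl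
  suffices l A = 0 by rw [hl] at this; linarith
  refine functional_eq_zero S hS l ?_ ?_ A hA
  -- Commutators: `s` and `sᵀ = ±s` are derivations of `Ψ`, so `der [s, A] Ψ = der s (der A Ψ)` is
  -- orthogonal to `Ψ`. Also `s` commutes with `gᵀ g`.
  · intro s hs' A
    have hsΨ : der s Ψ = 0 := by
      have := der_act g s hg Φ
      rwa [hSd s hs', act_zero, Matrix.mul_assoc, hgS s hs', nonsing_inv_mul_cancel_left _ _ hu]
        at this
    have hstΨ : der sᵀ Ψ = 0 := by
      rcases hS s hs' with e | e <;> rw [e]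
      · exact hsΨ
      · rw [der_neg, hsΨ, neg_zero]
    have hst : gᵀ * s = s * gᵀ := by
      have h := congrArg transpose (hgS s hs')
      simp only [transpose_mul] at h
      rcases hS s hs' with e | e <;> rw [e] at h
      · exact h
      · simpa using h
    have e1 : ipf Ψ (der (s * A - A * s) Ψ) = 0 := by
      rw [der_lie, hsΨ, der_zero, sub_zero, ← transpose_transpose s, ← ipf_der, hstΨ, ipf_comm,
        ipf_zero_right]
    have e2 : hs g (g * (s * A - A * s)) = 0 := by
      rw [hs, Matrix.mul_sub, Matrix.mul_sub, trace_sub, ← Matrix.mul_assoc g s, ← hgS s hs',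
        Matrix.mul_assoc s, ← Matrix.mul_assoc gᵀ s, hst, Matrix.mul_assoc s, trace_mul_comm s]
      simp [Matrix.mul_assoc]
    rw [hl, e1, e2]; simp
  -- The commutant: differentiate the functional along `g exp (t A)`, which stays in the domain.
  · intro A hA hAS
    have hd := (hasDerivAt_ipf_act A Ψ).add ((hasDerivAt_hs_mul_exp g A).const_mul δ)
    have hm : IsLocalMin ((fun t : ℝ => ipf (act (NormedSpace.exp (t • A)) Ψ)
        (act (NormedSpace.exp (t • A)) Ψ)) + fun t : ℝ =>
          δ * hs (g * NormedSpace.exp (t • A)) (g * NormedSpace.exp (t • A))) 0 := by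
      refine Eventually.of_forall fun t => ?_
      have := hmin (g * NormedSpace.exp (t • A))
        (by rw [det_mul, hg, det_exp_smul_of_trace_eq_zero A hA, one_mul])
        (fun s hs' => by
          rw [← Matrix.mul_assoc, hgS s hs', Matrix.mul_assoc, commute_exp (hAS s hs'),
            Matrix.mul_assoc])
      simpa [act_mul, act_one] using this
    have := hm.hasDerivAt_eq_zero hd
    rw [hl]; linarith

lemma isClosed_commutant (S : Set (Matrix ι ι ℝ)) :
    IsClosed {g : Matrix ι ι ℝ | g.det = 1 ∧ ∀ s ∈ S, s * g = g * s} := by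
  have : {g : Matrix ι ι ℝ | g.det = 1 ∧ ∀ s ∈ S, s * g = g * s} =
      {g : Matrix ι ι ℝ | g.det = 1} ∩ ⋂ s ∈ S, {g : Matrix ι ι ℝ | s * g = g * s} := by
    ext; simp
  rw [this]
  refine (isClosed_eq (by fun_prop) continuous_const).inter
    (isClosed_biInter fun s _ => isClosed_eq (by fun_prop) (by fun_prop))

lemma inv_eq_adjugate {g : Matrix ι ι ℝ} (hg : g.det = 1) : g⁻¹ = adjugate g := by
  rw [Matrix.inv_def, hg]; simp

/-- **Adapted inner products on a Lie algebra.** Let `Φ` be the structure tensor of a real Lie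
algebra without abelian ideals, and `S` a set of derivations that are symmetric or skew. There is a
unimodular `g` commuting with `S` such that the adjoint of a derivation with respect to the inner
product `⟨g⁻¹ x, g⁻¹ y⟩` is a derivation. -/
theorem exists_derivation_adjoint (Φ : ι → Matrix ι ι ℝ) (S : Set (Matrix ι ι ℝ))
    (hS : ∀ s ∈ S, sᵀ = s ∨ sᵀ = -s) (hSd : ∀ s ∈ S, der s Φ = 0)
    (hΦ : ∀ i, der (Φ i) Φ = 0)
    (hab : ∀ g₀ : Matrix ι ι ℝ, (∀ i v, ∃ w, g₀ *ᵥ w = Φ i *ᵥ (g₀ *ᵥ v)) →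
      (∀ i, tw g₀ Φ i * g₀ = 0) → g₀ = 0) :
    ∃ g : Matrix ι ι ℝ, g.det = 1 ∧ (∀ s ∈ S, s * g = g * s) ∧
      ∀ D, der D Φ = 0 → der (g * (g⁻¹ * D * g)ᵀ * g⁻¹) Φ = 0 := by
  -- The Euler–Lagrange equation for `A = [E, Eᵀ]`, where `E = g⁻¹ D g` is a derivation of
  -- `Ψ = act g Φ`; since `der E Ψ = 0`, the left-hand side is `⟨Ψ, der E (der Eᵀ Ψ)⟩ = ‖der Eᵀ Ψ‖²`.
  have hkey : ∀ (δ : ℝ) (g : Matrix ι ι ℝ), g.det = 1 → (∀ s ∈ S, s * g = g * s) →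
      (∀ h : Matrix ι ι ℝ, h.det = 1 → (∀ s ∈ S, s * h = h * s) →
        ipf (act g Φ) (act g Φ) + δ * hs g g ≤ ipf (act h Φ) (act h Φ) + δ * hs h h) →
      ∀ D, der D Φ = 0 → ipf (der (g⁻¹ * D * g)ᵀ (act g Φ)) (der (g⁻¹ * D * g)ᵀ (act g Φ)) =
        δ * trace (gᵀ * g * ((g⁻¹ * D * g) * (g⁻¹ * D * g)ᵀ
          - (g⁻¹ * D * g)ᵀ * (g⁻¹ * D * g))) := by
    intro δ g hg hgS hmin D hD
    have h0 : der (g⁻¹ * D * g) (act g Φ) = 0 := by rw [der_act g D hg, hD, act_zero]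
    generalize g⁻¹ * D * g = E at h0 ⊢
    have := euler_lagrange Φ S hS hSd δ g hg hgS hmin (E * Eᵀ - Eᵀ * E)
      (by rw [trace_sub, trace_mul_comm, sub_self])
    rw [der_lie, h0, der_zero, sub_zero] at this
    rw [ipf_der, transpose_transpose, this, hs, Matrix.mul_assoc]
  have hcont : ContinuousOn (fun g => ipf (act g Φ) (act g Φ))
      {g : Matrix ι ι ℝ | g.det = 1 ∧ ∀ s ∈ S, s * g = g * s} := by
    have : Continuous fun g : Matrix ι ι ℝ =>
        ∑ i, hs (adjugate g * tw g Φ i * g) (adjugate g * tw g Φ i * g) := by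
      refine continuous_finsetSum _ fun i _ => continuous_hs_self.comp ?_
      unfold tw
      fun_prop
    refine this.continuousOn.congr fun g hg => ?_
    simp only [ipf, act, inv_eq_adjugate hg.1]
  rcases minimiser_or_escape _ (isClosed_commutant S) ⟨det_one, fun s _ => by simp⟩ _ hcont
    (fun g => ipf_self_nonneg _) with ⟨g, ⟨hg, hgS⟩, hmin⟩ |
      ⟨δ, g, g₀, C, hδ, hgG, hmin, hC, hinf, hlim, hnorm⟩
  · refine ⟨g, hg, hgS, fun D hD => ?_⟩
    have hu : IsUnit g.det := by rw [hg]; exact isUnit_one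
    -- At a genuine minimiser `δ = 0`, so `Eᵀ` is a derivation of `Ψ`; transport it back by `g⁻¹`.
    have h0 := hkey 0 g hg hgS (fun h h1 h2 => by simpa using hmin h ⟨h1, h2⟩) D hD
    rw [zero_mul] at h0
    have h1 := ipf_self_eq_zero h0
    have h2 := der_act g (g * (g⁻¹ * D * g)ᵀ * g⁻¹) hg Φ
    have e : g⁻¹ * (g * (g⁻¹ * D * g)ᵀ * g⁻¹) * g = (g⁻¹ * D * g)ᵀ := by
      rw [Matrix.mul_assoc g, nonsing_inv_mul_cancel_left _ _ hu, Matrix.mul_assoc,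
        nonsing_inv_mul _ hu, Matrix.mul_one]
    rw [e, h1] at h2
    have h3 := congrArg (act g⁻¹) h2
    rwa [act_zero, ← act_mul, mul_nonsing_inv _ hu, act_one, eq_comm] at h3
  · exfalso
    -- The range of `g₀` is an ideal by `escape_invariant`. It is abelian because
    -- `tw g Φ i * g = g * act g Φ i` is quadratic in `g` on the left but, as `act g Φ` stays bounded,
    -- only of linear growth on the right.
    have hz : g₀ = 0 := by
      refine hab g₀ (fun i => escape_invariant g g₀ (fun k => (hgG k).1) hlim (Φ i) fun k => ?_)
        fun i => ?_
      · have := hkey (δ k) (g k) (hgG k).1 (hgG k).2 (fun h h1 h2 => hmin k h ⟨h1, h2⟩) (Φ i) (hΦ i)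
        have h2 := this ▸ ipf_self_nonneg _
        exact nonneg_of_mul_nonneg_right h2 (hδ k)
      · set s : ℕ → ℝ := fun k => √(hs (g k) (g k)) with hs_def
        have l1 : Tendsto (fun k => tw ((s k)⁻¹ • g k) Φ i * ((s k)⁻¹ • g k)) atTop
            (𝓝 (tw g₀ Φ i * g₀)) := by
          have : Continuous fun Y : Matrix ι ι ℝ => tw Y Φ i * Y := by
            unfold tw
            fun_prop
          exact (this.tendsto g₀).comp hlim
        refine tendsto_nhds_unique l1 ?_
        have hfac : ∀ k, tw ((s k)⁻¹ • g k) Φ i * ((s k)⁻¹ • g k) =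
            (s k)⁻¹ • (((s k)⁻¹ • g k) * act (g k) Φ i) := by
          intro k
          have hu : IsUnit (g k).det := by rw [(hgG k).1]; exact isUnit_one
          rw [act, Matrix.smul_mul, Matrix.mul_assoc (g k)⁻¹, mul_nonsing_inv_cancel_left _ _ hu]
          simp [tw, Finset.smul_sum, Finset.sum_mul, mul_smul]
        simp only [hfac]
        have hs0 : Tendsto (fun k => (s k)⁻¹) atTop (𝓝 0) :=
          tendsto_inv_atTop_zero.comp (Real.tendsto_sqrt_atTop.comp hinf)
        refine tendsto_pi_nhds.2 fun a => tendsto_pi_nhds.2 fun b => ?_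
        simp only [Matrix.smul_apply, Matrix.mul_apply, smul_eq_mul, Finset.mul_sum,
          Matrix.zero_apply]
        rw [← Finset.sum_const_zero (s := (Finset.univ : Finset ι))]
        refine tendsto_finsetSum _ fun j _ => ?_
        have l3 : Tendsto (fun k => (s k)⁻¹ * ((s k)⁻¹ * g k a j)) atTop (𝓝 (0 * g₀ a j)) :=
          hs0.mul (tendsto_pi_nhds.1 (tendsto_pi_nhds.1 hlim a) j)
        rw [zero_mul] at l3
        have hb : ∀ k, |act (g k) Φ i j b| ≤ √C := fun k =>
          abs_le_of_hs_le ((Finset.single_le_sum (f := fun i => hs (act (g k) Φ i) (act (g k) Φ i))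
            (fun i _ => hs_self_nonneg _) (Finset.mem_univ i)).trans (hC k)) j b
        have := bdd_le_mul_tendsto_zero' (√C) (Eventually.of_forall hb) l3
        refine this.congr fun k => ?_
        ring
    rw [hz] at hnorm
    simp [hs] at hnorm

end Tensors

/-! ### Invariant inner products -/

section Unitary
variable {ι κ : Type*} [Fintype ι] [DecidableEq ι] [Fintype κ] [DecidableEq κ]

lemma hs_add_left (X Y Z : Matrix ι ι ℝ) : hs (X + Y) Z = hs X Z + hs Y Z := by
  simp [hs, Matrix.add_mul]

lemma hs_add_right (X Y Z : Matrix ι ι ℝ) : hs X (Y + Z) = hs X Y + hs X Z := by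
  simp [hs, Matrix.mul_add]

lemma hs_sub_right (X Y Z : Matrix ι ι ℝ) : hs X (Y - Z) = hs X Y - hs X Z := by
  simp [hs, Matrix.mul_sub]

lemma hs_smul_right (c : ℝ) (X Y : Matrix ι ι ℝ) : hs X (c • Y) = c * hs X Y := by
  simp [hs]

lemma hs_smul_left (c : ℝ) (X Y : Matrix ι ι ℝ) : hs (c • X) Y = c * hs X Y := by
  simp [hs]

lemma hs_sum_right {α : Type*} (s : Finset α) (X : Matrix ι ι ℝ) (Y : α → Matrix ι ι ℝ) :
    hs X (∑ a ∈ s, Y a) = ∑ a ∈ s, hs X (Y a) := by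
  simp [hs, Finset.mul_sum]

lemma hs_sum_left {α : Type*} (s : Finset α) (X : Matrix ι ι ℝ) (Y : α → Matrix ι ι ℝ) :
    hs (∑ a ∈ s, Y a) X = ∑ a ∈ s, hs (Y a) X := by
  simp [hs, Finset.sum_mul, transpose_sum]

lemma hs_lie (A X Y : Matrix ι ι ℝ) : hs X (A * Y - Y * A) = hs (Aᵀ * X - X * Aᵀ) Y := by
  simp only [hs, Matrix.mul_sub, transpose_sub, transpose_mul, transpose_transpose, Matrix.sub_mul,
    trace_sub, Matrix.mul_assoc]
  congr 1
  rw [trace_mul_comm A, Matrix.mul_assoc]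

/-- For a representation `r` of a Lie algebra with totally antisymmetric structure constants, the
derivative of `∑ ‖r_i‖²` under conjugation in the direction `[r_j, r_jᵀ]` is, up to a constant
factor, a sum of squares. -/
lemma moment_identity (c : κ → κ → κ → ℝ) (hc2 : ∀ i j k, c i j k = -c i k j)
    (r : κ → Matrix ι ι ℝ) (hr : ∀ i j, r i * r j - r j * r i = ∑ k, c i j k • r k) (j : κ) :
    ∑ i, hs (r i) ((r j * (r j)ᵀ - (r j)ᵀ * r j) * r i - r i * (r j * (r j)ᵀ - (r j)ᵀ * r j)) =
      ∑ i, hs (((r j)ᵀ * r i - r i * (r j)ᵀ) + (r j * r i - r i * r j))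
        (((r j)ᵀ * r i - r i * (r j)ᵀ) + (r j * r i - r i * r j)) := by
  have e1 : ∀ i, hs (r i)
      ((r j * (r j)ᵀ - (r j)ᵀ * r j) * r i - r i * (r j * (r j)ᵀ - (r j)ᵀ * r j)) =
      hs ((r j)ᵀ * r i - r i * (r j)ᵀ) ((r j)ᵀ * r i - r i * (r j)ᵀ) -
        hs (r j * r i - r i * r j) (r j * r i - r i * r j) := by
    intro i
    rw [show (r j * (r j)ᵀ - (r j)ᵀ * r j) * r i - r i * (r j * (r j)ᵀ - (r j)ᵀ * r j) =
      (r j * ((r j)ᵀ * r i - r i * (r j)ᵀ) - ((r j)ᵀ * r i - r i * (r j)ᵀ) * r j) -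
        ((r j)ᵀ * (r j * r i - r i * r j) - (r j * r i - r i * r j) * (r j)ᵀ) by noncomm_ring,
      hs_sub_right, hs_lie (r j) (r i), hs_lie (r j)ᵀ (r i), transpose_transpose]
  have e2 : ∑ i, hs ((r j)ᵀ * r i - r i * (r j)ᵀ) (r j * r i - r i * r j) =
      -∑ i, hs (r j * r i - r i * r j) (r j * r i - r i * r j) := by
    calc _ = ∑ i, ∑ k, c j i k * hs (r i) (r j * r k - r k * r j) := by
          refine Finset.sum_congr rfl fun i _ => ?_
          rw [hr j i, hs_sum_right]
          refine Finset.sum_congr rfl fun k _ => ?_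
          rw [hs_smul_right, hs_lie]
      _ = ∑ k, -∑ i, c j k i * hs (r i) (r j * r k - r k * r j) := by
          rw [Finset.sum_comm]
          refine Finset.sum_congr rfl fun k _ => ?_
          rw [← Finset.sum_neg_distrib]
          refine Finset.sum_congr rfl fun i _ => ?_
          rw [hc2 j i k]; ring
      _ = _ := by
          rw [Finset.sum_neg_distrib]
          congr 1
          refine Finset.sum_congr rfl fun k _ => ?_
          conv_rhs => rw [show hs (r j * r k - r k * r j) (r j * r k - r k * r j) =
            hs (∑ i, c j k i • r i) (r j * r k - r k * r j) by rw [← hr]]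
          rw [hs_sum_left]
          simp only [hs_smul_left]
  simp only [e1, hs_add_left, hs_add_right, Finset.sum_add_distrib, Finset.sum_sub_distrib]
  simp only [hs_comm (r j * r _ - r _ * r j) ((r j)ᵀ * r _ - r _ * (r j)ᵀ)]
  rw [e2]; ring

lemma hasDerivAt_hs_conj (A X : Matrix ι ι ℝ) :
    HasDerivAt (fun t : ℝ => hs ((NormedSpace.exp (t • A))⁻¹ * X * NormedSpace.exp (t • A))
      ((NormedSpace.exp (t • A))⁻¹ * X * NormedSpace.exp (t • A)))
      (-2 * hs X (A * X - X * A)) 0 := by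
  have := (((hasEntryDeriv_exp_neg A).mul (hasEntryDeriv_const X)).mul
    (hasEntryDeriv_exp A)).hs_self
  convert! this using 1
  simp only [zero_smul, NormedSpace.exp_zero, inv_one, Matrix.one_mul, Matrix.mul_one,
    Matrix.mul_zero, add_zero, Matrix.neg_mul]
  rw [show -(A * X) + X * A = (-1 : ℝ) • (A * X - X * A) by rw [neg_one_smul]; abel,
    hs_smul_right]
  ring

/-- The unitary trick for irreducible representations, in matrix form. A unimodular `g` minimising
`∑ ‖g⁻¹ ρ_i g‖²` exists by irreducibility, and there the conjugated representation is skew. -/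
lemma exists_skew_of_irreducible (c : κ → κ → κ → ℝ) (hc2 : ∀ i j k, c i j k = -c i k j)
    (hcc : ∀ k l, ∑ i, ∑ j, c i j k * c i j l = if k = l then 1 else 0)
    (ρ : κ → Matrix ι ι ℝ) (hρ : ∀ i j, ρ i * ρ j - ρ j * ρ i = ∑ k, c i j k • ρ k)
    (hirr : ∀ g₀ : Matrix ι ι ℝ, g₀.det = 0 → (∀ i v, ∃ w, g₀ *ᵥ w = ρ i *ᵥ (g₀ *ᵥ v)) → g₀ = 0) :
    ∃ g : Matrix ι ι ℝ, g.det = 1 ∧ ∀ i, (g⁻¹ * ρ i * g)ᵀ = -(g⁻¹ * ρ i * g) := by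
  have hconj : ∀ g : Matrix ι ι ℝ, g.det = 1 → ∀ i j, (g⁻¹ * ρ i * g) * (g⁻¹ * ρ j * g) -
      (g⁻¹ * ρ j * g) * (g⁻¹ * ρ i * g) = ∑ k, c i j k • (g⁻¹ * ρ k * g) := by
    intro g hg i j
    have hu : IsUnit g.det := by rw [hg]; exact isUnit_one
    have : ∑ k, c i j k • (g⁻¹ * ρ k * g) = g⁻¹ * (ρ i * ρ j - ρ j * ρ i) * g := by
      rw [hρ]; simp [Finset.mul_sum, Finset.sum_mul]
    rw [this]
    simp only [Matrix.mul_sub, Matrix.sub_mul, Matrix.mul_assoc, mul_nonsing_inv_cancel_left _ _ hu]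
  set F : Matrix ι ι ℝ → ℝ := fun g => ∑ i, hs (g⁻¹ * ρ i * g) (g⁻¹ * ρ i * g) with hF
  have hkey : ∀ (δ : ℝ) (g : Matrix ι ι ℝ), g.det = 1 →
      (∀ h : Matrix ι ι ℝ, h.det = 1 → F g + δ * hs g g ≤ F h + δ * hs h h) →
      ∀ A, trace A = 0 →
        ∑ i, hs (g⁻¹ * ρ i * g) (A * (g⁻¹ * ρ i * g) - (g⁻¹ * ρ i * g) * A) =
          δ * hs g (g * A) := by
    intro δ g hg hmin A hA
    have hd := (HasDerivAt.fun_sum (u := Finset.univ) fun i _ =>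
      hasDerivAt_hs_conj A (g⁻¹ * ρ i * g)).add ((hasDerivAt_hs_mul_exp g A).const_mul δ)
    have := IsLocalMin.hasDerivAt_eq_zero ?_ hd
    · rw [← Finset.mul_sum] at this
      linarith
    · refine Eventually.of_forall fun t => ?_
      have := hmin (g * NormedSpace.exp (t • A))
        (by rw [det_mul, hg, det_exp_smul_of_trace_eq_zero A hA, one_mul])
      simpa [hF, Matrix.mul_inv_rev, Matrix.mul_assoc] using this
  -- The direction `A = [r_j, r_jᵀ]`, with `r_i = g⁻¹ ρ_i g`, turns the left-hand side into a sum of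
  -- squares.
  have hkey2 : ∀ (δ : ℝ) (g : Matrix ι ι ℝ), g.det = 1 →
      (∀ h : Matrix ι ι ℝ, h.det = 1 → F g + δ * hs g g ≤ F h + δ * hs h h) → ∀ j,
      ∑ i, hs (((g⁻¹ * ρ j * g)ᵀ * (g⁻¹ * ρ i * g) - (g⁻¹ * ρ i * g) * (g⁻¹ * ρ j * g)ᵀ) +
          ((g⁻¹ * ρ j * g) * (g⁻¹ * ρ i * g) - (g⁻¹ * ρ i * g) * (g⁻¹ * ρ j * g)))
        (((g⁻¹ * ρ j * g)ᵀ * (g⁻¹ * ρ i * g) - (g⁻¹ * ρ i * g) * (g⁻¹ * ρ j * g)ᵀ) +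
          ((g⁻¹ * ρ j * g) * (g⁻¹ * ρ i * g) - (g⁻¹ * ρ i * g) * (g⁻¹ * ρ j * g))) =
        δ * trace (gᵀ * g * ((g⁻¹ * ρ j * g) * (g⁻¹ * ρ j * g)ᵀ
          - (g⁻¹ * ρ j * g)ᵀ * (g⁻¹ * ρ j * g))) := by
    intro δ g hg hmin j
    rw [← moment_identity c hc2 (fun i => g⁻¹ * ρ i * g) (hconj g hg) j]
    rw [hkey δ g hg hmin _ (by rw [trace_sub, trace_mul_comm, sub_self]), hs, ← Matrix.mul_assoc gᵀ g]
  have hcont : ContinuousOn F {g : Matrix ι ι ℝ | g.det = 1} := by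
    have : Continuous fun g : Matrix ι ι ℝ =>
        ∑ i, hs (adjugate g * ρ i * g) (adjugate g * ρ i * g) := by
      refine continuous_finsetSum _ fun i _ => continuous_hs_self.comp ?_
      fun_prop
    refine this.continuousOn.congr fun g hg => ?_
    simp only [hF, inv_eq_adjugate hg]
  rcases minimiser_or_escape {g : Matrix ι ι ℝ | g.det = 1}
    (isClosed_eq (by fun_prop) continuous_const) det_one F hcont
    (fun g => Finset.sum_nonneg fun i _ => hs_self_nonneg _) with ⟨g, hg, hmin⟩ |
      ⟨δ, g, g₀, C, hδ, hgG, hmin, hC, hinf, hlim, hnorm⟩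
  · refine ⟨g, hg, ?_⟩
    have h0 := hkey2 0 g hg (fun h h1 => by simpa using hmin h h1)
    have hr := hconj g hg
    generalize hr_def : (fun i => g⁻¹ * ρ i * g) = r at *
    have hr_def' : ∀ i, g⁻¹ * ρ i * g = r i := fun i => congrFun hr_def i
    simp only [hr_def'] at h0 hr ⊢
    -- At a minimiser all `r_j + r_jᵀ` commute with all `r_i`, hence with all `r_iᵀ`. So `r` and
    -- `-rᵀ` have the same brackets: `∑_k c_{ijk} (r_k + r_kᵀ) = 0`, and `hcc` isolates each term.
    have h1 : ∀ j i, (r j + (r j)ᵀ) * r i = r i * (r j + (r j)ᵀ) := by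
      intro j i
      have := h0 j
      rw [zero_mul] at this
      have := hs_self_eq_zero ((Finset.sum_eq_zero_iff_of_nonneg fun i _ =>
        hs_self_nonneg _).1 this i (Finset.mem_univ i))
      rw [← sub_eq_zero, ← this]
      noncomm_ring
    have h2 : ∀ j i, (r j + (r j)ᵀ) * (r i)ᵀ = (r i)ᵀ * (r j + (r j)ᵀ) := by
      intro j i
      have := congrArg transpose (h1 j i)
      simp only [transpose_mul, transpose_add, transpose_transpose] at this
      rw [add_comm (r j)]; exact this.symm
    have h3 : ∀ i j, ∑ k, c i j k • (r k + (r k)ᵀ) = 0 := by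
      intro i j
      have e1 : ∑ k, c i j k • (r k)ᵀ = (r i * r j - r j * r i)ᵀ := by
        rw [hr, transpose_sum]; simp
      simp only [smul_add, Finset.sum_add_distrib]
      rw [← hr, e1, transpose_sub, transpose_mul, transpose_mul]
      have a1 := h1 i j
      have a2 := h1 j i
      have a3 := h2 i j
      have e2 : r i * r j - r j * r i + ((r j)ᵀ * (r i)ᵀ - (r i)ᵀ * (r j)ᵀ) =
        ((r i + (r i)ᵀ) * r j - r j * (r i + (r i)ᵀ)) -
          ((r i + (r i)ᵀ) * (r j)ᵀ - (r j)ᵀ * (r i + (r i)ᵀ)) -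
          ((r i + (r i)ᵀ) * r j - r j * (r i + (r i)ᵀ)) +
          (r i * (r j + (r j)ᵀ) - (r j + (r j)ᵀ) * r i) := by noncomm_ring
      rw [e2, a1, a2, a3]; simp
    intro l
    have h4 : r l + (r l)ᵀ = 0 := by
      calc r l + (r l)ᵀ = ∑ k, (if k = l then (1 : ℝ) else 0) • (r k + (r k)ᵀ) := by
            simp only [ite_smul, one_smul, zero_smul, Finset.sum_ite_eq', Finset.mem_univ, if_true]
        _ = ∑ i, ∑ j, c i j l • ∑ k, c i j k • (r k + (r k)ᵀ) := by
            simp only [← hcc, Finset.sum_smul, Finset.smul_sum, smul_smul]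
            rw [Finset.sum_comm]
            refine Finset.sum_congr rfl fun i _ => ?_
            rw [Finset.sum_comm]
            refine Finset.sum_congr rfl fun j _ => Finset.sum_congr rfl fun k _ => ?_
            rw [mul_comm]
        _ = 0 := by simp only [h3, smul_zero, Finset.sum_const_zero]
    rw [add_comm] at h4
    exact eq_neg_of_add_eq_zero_left h4
  · exfalso
    have hne : Nonempty ι := by
      by_contra h
      rw [not_nonempty_iff] at h
      simp [hs_eq_sum] at hnorm
    -- The range of `g₀` is a proper invariant subspace: `det g₀ = 0` because `det (g k) = 1` while
    -- `‖g k‖ → ∞`.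
    have hdet : g₀.det = 0 := by
      have l1 : Tendsto (fun k => ((√(hs (g k) (g k)))⁻¹ • g k).det) atTop (𝓝 g₀.det) :=
        ((Continuous.matrix_det continuous_id).tendsto g₀).comp hlim
      refine tendsto_nhds_unique l1 ?_
      have hs0 : Tendsto (fun k => (√(hs (g k) (g k)))⁻¹) atTop (𝓝 0) :=
        tendsto_inv_atTop_zero.comp (Real.tendsto_sqrt_atTop.comp hinf)
      have := hs0.pow (Fintype.card ι)
      rw [zero_pow Fintype.card_ne_zero] at this
      refine this.congr fun k => ?_
      rw [det_smul, show (g k).det = 1 from hgG k, mul_one]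
    have hz := hirr g₀ hdet fun i => escape_invariant g g₀ hgG hlim (ρ i) fun k => by
      have := hkey2 (δ k) (g k) (hgG k) (hmin k) i
      have h2 := this ▸ Finset.sum_nonneg fun i _ => hs_self_nonneg _
      exact nonneg_of_mul_nonneg_right h2 (hδ k)
    rw [hz] at hnorm
    simp [hs] at hnorm

/-- Whitehead's first lemma for skew representations. The Casimir operator `C = ∑ π_i²` is
symmetric with kernel the invariants, which gives `T` with `C T = ∑ π_i f_i`; the cocycle
`f_i - π_i T` then vanishes. -/
lemma whitehead {E : Type*} [AddCommGroup E] [Module ℝ E] [FiniteDimensional ℝ E]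
    (B : E →ₗ[ℝ] E →ₗ[ℝ] ℝ) (hB : ∀ x y, B x y = B y x) (hpos : ∀ x, x ≠ 0 → 0 < B x x)
    (c : κ → κ → κ → ℝ) (hc1 : ∀ i j k, c i j k = -c k j i)
    (hcc : ∀ k l, ∑ i, ∑ j, c i j k * c i j l = if k = l then 1 else 0)
    (π : κ → E →ₗ[ℝ] E) (hskew : ∀ i x y, B (π i x) y = -B x (π i y))
    (hπ : ∀ i j x, π i (π j x) - π j (π i x) = ∑ k, c i j k • π k x)
    (f : κ → E) (hf : ∀ i j, π i (f j) - π j (f i) = ∑ k, c i j k • f k) :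
    ∃ T, ∀ i, π i T = f i := by
  set C : E →ₗ[ℝ] E := ∑ i, π i ∘ₗ π i with hC
  have hCa : ∀ x, C x = ∑ i, π i (π i x) := by intro x; simp [hC]
  have hnn : ∀ x, 0 ≤ B x x := fun x => by
    rcases eq_or_ne x 0 with rfl | h
    · simp
    · exact (hpos x h).le
  -- `⟨x, C x⟩ = -∑ ‖π_i x‖²`.
  have hker : ∀ x, C x = 0 → ∀ i, π i x = 0 := by
    intro x hx i
    have h : ∑ i, B (π i x) (π i x) = 0 := by
      have : B x (C x) = 0 := by rw [hx, map_zero]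
      rw [hCa, map_sum] at this
      simp only [hskew, Finset.sum_neg_distrib, this, neg_zero]
    have := (Finset.sum_eq_zero_iff_of_nonneg fun i _ => hnn (π i x)).1 h i (Finset.mem_univ i)
    by_contra hne
    exact (hpos _ hne).ne' this
  -- The structure constants are antisymmetric in their outer indices, so the two sums over brackets
  -- cancel.
  have hcoc : ∀ f : κ → E, (∀ i j, π i (f j) - π j (f i) = ∑ k, c i j k • f k) → ∀ j,
      C (f j) = π j (∑ i, π i (f i)) := by
    intro f hf j
    have e : ∀ i, π i (π i (f j)) = π j (π i (f i)) + ∑ k, c i j k • π k (f i)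
        + ∑ k, c i j k • π i (f k) := by
      intro i
      have h1 := hf i j
      rw [sub_eq_iff_eq_add] at h1
      have h2 := hπ i j (f i)
      rw [sub_eq_iff_eq_add] at h2
      rw [h1, map_add, h2, map_sum]
      simp only [map_smul]
      abel
    rw [hCa, map_sum]
    simp only [e, Finset.sum_add_distrib]
    rw [add_assoc, add_eq_left]
    have : ∑ i, ∑ k, c i j k • π k (f i) = -∑ i, ∑ k, c i j k • π i (f k) := by
      rw [Finset.sum_comm, ← Finset.sum_neg_distrib]
      refine Finset.sum_congr rfl fun i _ => ?_
      rw [← Finset.sum_neg_distrib]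
      refine Finset.sum_congr rfl fun k _ => ?_
      rw [hc1 k j i, neg_smul]
    rw [this, neg_add_cancel]
  obtain ⟨T, hT⟩ := mem_range_of_symm B hB hpos C
    (fun x y => by simp [hCa, hskew]) (∑ i, π i (f i)) (fun z hz => by
      simp [hskew, hker z hz])
  refine ⟨T, ?_⟩
  have hf' : ∀ i j, π i (f j - π j T) - π j (f i - π i T) = ∑ k, c i j k • (f k - π k T) := by
    intro i j
    simp only [map_sub, smul_sub, Finset.sum_sub_distrib, ← hf, ← hπ]
    abel
  -- The corrected cocycle is invariant, and an invariant cocycle vanishes on brackets, hence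
  -- everywhere by `hcc`.
  have h0 : ∀ j, C (f j - π j T) = 0 := by
    intro j
    rw [hcoc (fun i => f i - π i T) hf' j]
    simp only [map_sub, Finset.sum_sub_distrib]
    rw [← hT, hCa, sub_self]
  have h1 : ∀ i j, ∑ k, c i j k • (f k - π k T) = 0 := by
    intro i j
    rw [← hf', hker _ (h0 j), hker _ (h0 i), sub_zero]
  intro l
  have h4 : f l - π l T = 0 := by
    calc f l - π l T = ∑ k, (if k = l then (1 : ℝ) else 0) • (f k - π k T) := by simp
      _ = ∑ i, ∑ j, c i j l • ∑ k, c i j k • (f k - π k T) := by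
          simp only [← hcc, Finset.sum_smul, Finset.smul_sum, smul_smul]
          rw [Finset.sum_comm]
          refine Finset.sum_congr rfl fun i _ => ?_
          rw [Finset.sum_comm]
          refine Finset.sum_congr rfl fun j _ => Finset.sum_congr rfl fun k _ => ?_
          rw [mul_comm]
      _ = 0 := by simp [h1]
  exact (sub_eq_zero.1 h4).symm

lemma exists_orthonormal_basis {E : Type*} [AddCommGroup E] [Module ℝ E] [FiniteDimensional ℝ E]
    (B : E →ₗ[ℝ] E →ₗ[ℝ] ℝ) (hB : ∀ x y, B x y = B y x) (hpos : ∀ x, x ≠ 0 → 0 < B x x) :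
    ∃ b : Module.Basis (Fin (Module.finrank ℝ E)) ℝ E,
      ∀ i j, B (b i) (b j) = if i = j then 1 else 0 := by
  let core : InnerProductSpace.Core ℝ E :=
    { inner := fun x y => B x y
      conj_inner_symm := fun x y => by simp [hB x y]
      re_inner_nonneg := fun x => by
        rcases eq_or_ne x 0 with rfl | h
        · simp
        · exact (hpos x h).le
      add_left := fun x y z => by simp
      smul_left := fun x y r => by simp
      definite := fun x hx => by
        by_contra h
        exact (hpos x h).ne' hx }
  let : NormedAddCommGroup E := core.toNormedAddCommGroup
  let : InnerProductSpace ℝ E := InnerProductSpace.ofCore core.toCore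
  refine ⟨(stdOrthonormalBasis ℝ E).toBasis, fun i j => ?_⟩
  have := orthonormal_iff_ite.1 (stdOrthonormalBasis ℝ E).orthonormal i j
  rw [OrthonormalBasis.coe_toBasis]
  exact this

end Unitary

section Unitary2
variable {ι κ : Type*} [Fintype ι] [DecidableEq ι] [Fintype κ] [DecidableEq κ]

/-- The unitary trick for irreducible representations: the form is the Euclidean inner product
pulled back along `x ↦ g⁻¹ x`, with `g` from `exists_skew_of_irreducible`. -/
lemma exists_invariant_form_of_irreducible (c : κ → κ → κ → ℝ)
    (hc2 : ∀ i j k, c i j k = -c i k j)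
    (hcc : ∀ k l, ∑ i, ∑ j, c i j k * c i j l = if k = l then 1 else 0)
    {V : Type*} [AddCommGroup V] [Module ℝ V] [FiniteDimensional ℝ V]
    (ρ : κ → V →ₗ[ℝ] V)
    (hρ : ∀ i j x, ρ i (ρ j x) - ρ j (ρ i x) = ∑ k, c i j k • ρ k x)
    (hirr : ∀ I : Submodule ℝ V, (∀ i, ∀ x ∈ I, ρ i x ∈ I) → I = ⊥ ∨ I = ⊤) :
    ∃ B : V →ₗ[ℝ] V →ₗ[ℝ] ℝ, (∀ x y, B x y = B y x) ∧ (∀ x, x ≠ 0 → 0 < B x x) ∧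
      ∀ i x y, B (ρ i x) y = -B x (ρ i y) := by
  set b := Module.finBasis ℝ V with hb
  set R : κ → Matrix _ _ ℝ := fun i => LinearMap.toMatrix b b (ρ i) with hR
  have hRb : ∀ i x, b.equivFun (ρ i x) = R i *ᵥ b.equivFun x := fun i x =>
    (LinearMap.toMatrix_mulVec_repr b b (ρ i) x).symm
  have hRR : ∀ i j, R i * R j - R j * R i = ∑ k, c i j k • R k := by
    intro i j
    simp only [hR]
    rw [← LinearMap.toMatrix_mul, ← LinearMap.toMatrix_mul, ← map_sub]
    simp only [← map_smul, ← map_sum]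
    congr 1
    ext x
    simpa using hρ i j x
  obtain ⟨g, hg, hskew⟩ := exists_skew_of_irreducible c hc2 hcc R hRR (by
    intro g₀ hdet hinv
    have hsub : ∀ i, ∀ x ∈ LinearMap.range (Matrix.toLin b b g₀),
        ρ i x ∈ LinearMap.range (Matrix.toLin b b g₀) := by
      rintro i _ ⟨y, rfl⟩
      obtain ⟨w, hw⟩ := hinv i (b.equivFun y)
      refine ⟨b.equivFun.symm w, b.equivFun.injective ?_⟩
      rw [hRb]
      have h : ∀ y, b.equivFun (Matrix.toLin b b g₀ y) = g₀ *ᵥ b.equivFun y := by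
        intro y
        have := (LinearMap.toMatrix_mulVec_repr b b (Matrix.toLin b b g₀) y).symm
        rwa [LinearMap.toMatrix_toLin] at this
      rw [h, h, LinearEquiv.apply_symm_apply, hw]
    rcases hirr _ hsub with h | h
    · rw [LinearMap.range_eq_bot] at h
      simpa using h
    · exfalso
      have hs := LinearMap.range_eq_top.1 h
      have hu : IsUnit (Matrix.toLin b b g₀) := by
        rw [Module.End.isUnit_iff]
        exact ⟨LinearMap.injective_iff_surjective.2 hs, hs⟩
      have := (LinearMap.isUnit_det _ hu).ne_zero
      rw [LinearMap.det_toLin] at this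
      exact this hdet)
  have hu : IsUnit g.det := by rw [hg]; exact isUnit_one
  set f : V →ₗ[ℝ] (Fin (Module.finrank ℝ V) → ℝ) := (g⁻¹).mulVecLin ∘ₗ b.equivFun with hf
  have hfa : ∀ x, f x = g⁻¹ *ᵥ b.equivFun x := fun x => rfl
  have hfinj : ∀ x, f x = 0 → x = 0 := by
    intro x hx
    have h := congrArg (g *ᵥ ·) hx
    simp only [hfa, mulVec_mulVec, mul_nonsing_inv _ hu, one_mulVec, mulVec_zero] at h
    exact b.equivFun.map_eq_zero_iff.1 h
  have hfρ : ∀ i x, f (ρ i x) = (g⁻¹ * R i * g) *ᵥ f x := by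
    intro i x
    rw [hfa, hfa, hRb, mulVec_mulVec, mulVec_mulVec, Matrix.mul_assoc _ g, mul_nonsing_inv _ hu,
      Matrix.mul_one]
  refine ⟨(dotProductBilin ℝ ℝ).compl₁₂ f f, fun x y => dotProduct_comm _ _, fun x hx => ?_,
    fun i x y => ?_⟩
  · have h0 : f x ⬝ᵥ f x ≠ 0 := fun h => hx (hfinj x (dotProduct_self_eq_zero.1 h))
    change 0 < f x ⬝ᵥ f x
    exact lt_of_le_of_ne (Finset.sum_nonneg fun i _ => mul_self_nonneg _) h0.symm
  · change f (ρ i x) ⬝ᵥ f y = -(f x ⬝ᵥ f (ρ i y))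
    rw [hfρ, hfρ, dotProduct_mulVec, ← mulVec_transpose, hskew, neg_mulVec, neg_dotProduct, neg_neg]

/-- An invariant subspace has an equivariant projection, given invariant inner products on it and
on the quotient: the obstruction is a cocycle with values in `Hom(V/I, I)`, which carries an
invariant inner product. -/
lemma exists_equivariant_projection (c : κ → κ → κ → ℝ)
    (hc1 : ∀ i j k, c i j k = -c k j i)
    (hcc : ∀ k l, ∑ i, ∑ j, c i j k * c i j l = if k = l then 1 else 0)
    {V : Type*} [AddCommGroup V] [Module ℝ V] [FiniteDimensional ℝ V]
    (ρ : κ → V →ₗ[ℝ] V)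
    (hρ : ∀ i j x, ρ i (ρ j x) - ρ j (ρ i x) = ∑ k, c i j k • ρ k x)
    (I : Submodule ℝ V) (ρI : κ → I →ₗ[ℝ] I) (hI : ∀ i x, (ρI i x : V) = ρ i x)
    (ρQ : κ → (V ⧸ I) →ₗ[ℝ] (V ⧸ I)) (hQ : ∀ i x, ρQ i (I.mkQ x) = I.mkQ (ρ i x))
    (BI : I →ₗ[ℝ] I →ₗ[ℝ] ℝ) (hBI : ∀ x y, BI x y = BI y x) (hBIpos : ∀ x, x ≠ 0 → 0 < BI x x)
    (hBIinv : ∀ i x y, BI (ρI i x) y = -BI x (ρI i y))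
    (BQ : (V ⧸ I) →ₗ[ℝ] (V ⧸ I) →ₗ[ℝ] ℝ) (hBQ : ∀ x y, BQ x y = BQ y x)
    (hBQpos : ∀ x, x ≠ 0 → 0 < BQ x x)
    (hBQinv : ∀ i x y, BQ (ρQ i x) y = -BQ x (ρQ i y)) :
    ∃ P : V →ₗ[ℝ] I, (∀ x : I, P x = x) ∧ ∀ i x, P (ρ i x) = ρI i (P x) := by
  obtain ⟨P₀, hP₀⟩ := LinearMap.exists_leftInverse_of_injective I.subtype I.ker_subtype
  have hP₀' : ∀ x : I, P₀ x = x := fun x => LinearMap.congr_fun hP₀ x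
  have hρI : ∀ i j x, ρI i (ρI j x) - ρI j (ρI i x) = ∑ k, c i j k • ρI k x := by
    intro i j x
    apply Subtype.ext
    simpa [hI] using hρ i j x
  have hρQ : ∀ i j x, ρQ i (ρQ j x) - ρQ j (ρQ i x) = ∑ k, c i j k • ρQ k x := by
    intro i j x
    obtain ⟨x, rfl⟩ := I.mkQ_surjective x
    simp only [hQ, ← map_sub, ← map_smul, ← map_sum, hρ]
  obtain ⟨q, hq⟩ := exists_orthonormal_basis BQ hBQ hBQpos
  have hexp : ∀ y, y = ∑ a, BQ (q a) y • q a := by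
    intro y
    have h : ∀ a, q.repr y a = BQ (q a) y := by
      intro a
      conv_rhs => rw [← q.sum_repr y, map_sum]
      simp only [map_smul, hq]
      simp
    conv_lhs => rw [← q.sum_repr y]
    simp only [h]
  -- The Hilbert–Schmidt form on `Hom (V/I, I)`, written in an orthonormal basis `q` of `V/I`.
  let B : (V ⧸ I →ₗ[ℝ] I) →ₗ[ℝ] (V ⧸ I →ₗ[ℝ] I) →ₗ[ℝ] ℝ :=
    ∑ a, BI.compl₁₂ (LinearMap.applyₗ (q a)) (LinearMap.applyₗ (q a))
  have hB : ∀ T S, B T S = ∑ a, BI (T (q a)) (S (q a)) := by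
    intro T S
    simp [B]
  let π : κ → (V ⧸ I →ₗ[ℝ] I) →ₗ[ℝ] (V ⧸ I →ₗ[ℝ] I) := fun i =>
    LinearMap.compRight ℝ (ρI i) - LinearMap.lcomp ℝ I (ρQ i)
  have hπ : ∀ i T x, π i T x = ρI i (T x) - T (ρQ i x) := fun i T x => rfl
  -- The failure of an arbitrary projection `P₀` to be equivariant.
  let f : κ → (V ⧸ I →ₗ[ℝ] I) := fun i => I.liftQ (ρI i ∘ₗ P₀ - P₀ ∘ₗ ρ i) (by
    intro x hx
    rw [LinearMap.mem_ker, LinearMap.sub_apply, LinearMap.comp_apply, LinearMap.comp_apply,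
      hP₀' ⟨x, hx⟩, ← hI i ⟨x, hx⟩, hP₀', sub_self])
  have hf : ∀ i x, f i (I.mkQ x) = ρI i (P₀ x) - P₀ (ρ i x) := fun i x => rfl
  obtain ⟨T, hT⟩ := whitehead B (fun T S => by simp only [hB, hBI])
    (fun T hT => by
      have hnn : ∀ x, 0 ≤ BI x x := fun x => by
        rcases eq_or_ne x 0 with rfl | h
        · simp
        · exact (hBIpos x h).le
      rw [hB]
      refine lt_of_le_of_ne (Finset.sum_nonneg fun a _ => hnn _) fun h => hT ?_
      refine q.ext fun a => ?_
      have := (Finset.sum_eq_zero_iff_of_nonneg fun a _ => hnn (T (q a))).1 h.symm a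
        (Finset.mem_univ a)
      by_contra hne
      exact (hBIpos _ hne).ne' this)
    c hc1 hcc π
    (fun i T S => by
      have e1 : ∑ a, BI (T (ρQ i (q a))) (S (q a)) =
          ∑ a, ∑ b, BQ (q b) (ρQ i (q a)) * BI (T (q b)) (S (q a)) := by
        refine Finset.sum_congr rfl fun a _ => ?_
        conv_lhs => rw [hexp (ρQ i (q a))]
        simp
      have e2 : ∑ a, BI (T (q a)) (S (ρQ i (q a))) =
          ∑ a, ∑ b, BQ (q b) (ρQ i (q a)) * BI (T (q a)) (S (q b)) := by
        refine Finset.sum_congr rfl fun a _ => ?_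
        conv_lhs => rw [hexp (ρQ i (q a))]
        simp
      have e3 : ∑ a, BI (T (ρQ i (q a))) (S (q a)) = -∑ a, BI (T (q a)) (S (ρQ i (q a))) := by
        rw [e1, e2, Finset.sum_comm, ← Finset.sum_neg_distrib]
        refine Finset.sum_congr rfl fun a _ => ?_
        rw [← Finset.sum_neg_distrib]
        refine Finset.sum_congr rfl fun b _ => ?_
        rw [hBQ (q a), hBQinv]; ring
      simp only [hB, hπ, map_sub, LinearMap.sub_apply, hBIinv, Finset.sum_sub_distrib, e3,
        Finset.sum_neg_distrib]
      ring)
    (fun i j T => by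
      refine LinearMap.ext fun x => ?_
      simp only [LinearMap.sub_apply, LinearMap.sum_apply, LinearMap.smul_apply, hπ, map_sub,
        smul_sub, Finset.sum_sub_distrib]
      rw [← hρI, show ∑ k, c i j k • T (ρQ k x) = T (∑ k, c i j k • ρQ k x) by simp, ← hρQ, map_sub]
      abel)
    f
    (fun i j => by
      refine LinearMap.ext fun x => ?_
      obtain ⟨x, rfl⟩ := I.mkQ_surjective x
      simp only [LinearMap.sub_apply, LinearMap.sum_apply, LinearMap.smul_apply, hπ, hQ, hf,
        map_sub, smul_sub, Finset.sum_sub_distrib]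
      rw [← hρI, show ∑ k, c i j k • P₀ (ρ k x) = P₀ (∑ k, c i j k • ρ k x) by simp, ← hρ, map_sub]
      abel)
  refine ⟨P₀ - T ∘ₗ I.mkQ, fun x => ?_, fun i x => ?_⟩
  · rw [LinearMap.sub_apply, LinearMap.comp_apply, Submodule.mkQ_apply,
      (Submodule.Quotient.mk_eq_zero I).2 x.2, map_zero, sub_zero, hP₀']
  · have h := LinearMap.congr_fun (hT i) (I.mkQ x)
    rw [hπ, hf, hQ] at h
    simp only [LinearMap.sub_apply, LinearMap.comp_apply, map_sub]
    rw [sub_eq_sub_iff_add_eq_add] at h ⊢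
    rw [add_comm (P₀ _), h]

/-- **Unitary trick.** A finite-dimensional real representation of a Lie algebra with totally
antisymmetric structure constants, normalised so that `-1` times its Killing form is the standard
inner product, carries an invariant inner product. -/
theorem exists_invariant_form (c : κ → κ → κ → ℝ)
    (hc1 : ∀ i j k, c i j k = -c k j i) (hc2 : ∀ i j k, c i j k = -c i k j)
    (hcc : ∀ k l, ∑ i, ∑ j, c i j k * c i j l = if k = l then 1 else 0) (n : ℕ) :
    ∀ {V : Type u} [AddCommGroup V] [Module ℝ V] [FiniteDimensional ℝ V]
    (ρ : κ → V →ₗ[ℝ] V) (hn : Module.finrank ℝ V = n)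
    (hρ : ∀ i j x, ρ i (ρ j x) - ρ j (ρ i x) = ∑ k, c i j k • ρ k x),
    ∃ B : V →ₗ[ℝ] V →ₗ[ℝ] ℝ, (∀ x y, B x y = B y x) ∧ (∀ x, x ≠ 0 → 0 < B x x) ∧
      ∀ i x y, B (ρ i x) y = -B x (ρ i y) := by
  induction n using Nat.strong_induction_on with
  | _ n ih =>
    intro V _ _ _ ρ hn hρ
    by_cases hirr : ∀ I : Submodule ℝ V, (∀ i, ∀ x ∈ I, ρ i x ∈ I) → I = ⊥ ∨ I = ⊤
    · exact exists_invariant_form_of_irreducible c hc2 hcc ρ hρ hirr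
    · push Not at hirr
      obtain ⟨I, hinv, hbot, htop⟩ := hirr
      have h1 : Module.finrank ℝ I < n := hn ▸ Submodule.finrank_lt htop
      have h2 : Module.finrank ℝ (V ⧸ I) < n := by
        have := I.finrank_quotient_add_finrank
        have : 0 < Module.finrank ℝ I := by
          rw [Nat.pos_iff_ne_zero, Ne, Submodule.finrank_eq_zero]
          exact hbot
        omega
      set ρI : κ → I →ₗ[ℝ] I := fun i => (ρ i).restrict (hinv i) with hρI
      set ρQ : κ → (V ⧸ I) →ₗ[ℝ] (V ⧸ I) := fun i => I.mapQ I (ρ i) (hinv i) with hρQ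
      have hI : ∀ i x, (ρI i x : V) = ρ i x := fun i x => rfl
      have hQ : ∀ i x, ρQ i (I.mkQ x) = I.mkQ (ρ i x) := fun i x => rfl
      obtain ⟨BI, hBI, hBIpos, hBIinv⟩ := ih _ h1 ρI rfl (by
        intro i j x
        apply Subtype.ext
        simpa [hI] using hρ i j x)
      obtain ⟨BQ, hBQ, hBQpos, hBQinv⟩ := ih _ h2 ρQ rfl (by
        intro i j x
        obtain ⟨x, rfl⟩ := I.mkQ_surjective x
        simp only [hQ, ← map_sub, ← map_smul, ← map_sum, hρ])
      obtain ⟨P, hP, hPρ⟩ := exists_equivariant_projection c hc1 hcc ρ hρ I ρI hI ρQ hQ BI hBI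
        hBIpos hBIinv BQ hBQ hBQpos hBQinv
      -- The orthogonal sum of the two forms along the splitting `V ≅ I ⊕ V/I` given by `P`.
      refine ⟨BI.compl₁₂ P P + BQ.compl₁₂ I.mkQ I.mkQ, fun x y => ?_, fun x hx => ?_,
        fun i x y => ?_⟩
      · simp only [LinearMap.add_apply, LinearMap.compl₁₂_apply, hBI (P x), hBQ (I.mkQ x)]
      · have n1 : 0 ≤ BI (P x) (P x) := by
          rcases eq_or_ne (P x) 0 with h | h
          · simp [h]
          · exact (hBIpos _ h).le
        simp only [LinearMap.add_apply, LinearMap.compl₁₂_apply]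
        by_cases h : I.mkQ x = 0
        · rw [h, map_zero, add_zero]
          refine hBIpos _ fun h0 => hx ?_
          rw [Submodule.mkQ_apply, Submodule.Quotient.mk_eq_zero] at h
          have := hP ⟨x, h⟩
          rw [h0] at this
          exact congrArg Subtype.val this.symm
        · linarith [hBQpos _ h]
      · simp only [LinearMap.add_apply, LinearMap.compl₁₂_apply, hPρ, ← hQ, hBIinv, hBQinv]
        ring

end Unitary2

/-! ### Conjugations and real bases -/

section Conjugations
variable {L : Type*} [LieRing L] [LieAlgebra ℂ L] [FiniteDimensional ℂ L]

namespace IsConjugation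
variable {σ : L → L}

lemma map_zero (hσ : IsConjugation σ) : σ 0 = 0 := by
  simpa using hσ.map_smul 0 0

lemma map_neg (hσ : IsConjugation σ) (x : L) : σ (-x) = -σ x := by
  simpa using hσ.map_smul (-1) x

lemma map_sub (hσ : IsConjugation σ) (x y : L) : σ (x - y) = σ x - σ y := by
  rw [sub_eq_add_neg, hσ.map_add, hσ.map_neg, sub_eq_add_neg]

lemma map_real_smul (hσ : IsConjugation σ) (c : ℝ) (x : L) : σ (c • x) = c • σ x := by
  rw [← Complex.coe_smul, hσ.map_smul, Complex.conj_ofReal, Complex.coe_smul]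

lemma map_I_smul (hσ : IsConjugation σ) (x : L) : σ (Complex.I • x) = -(Complex.I • σ x) := by
  rw [hσ.map_smul, Complex.conj_I, neg_smul]

lemma map_sum (hσ : IsConjugation σ) {ι : Type*} (s : Finset ι) (f : ι → L) :
    σ (∑ i ∈ s, f i) = ∑ i ∈ s, σ (f i) := by
  let F : L →+ L := { toFun := σ, map_zero' := hσ.map_zero, map_add' := hσ.map_add }
  exact _root_.map_sum F f s

/-- Real and imaginary parts with respect to a conjugation. -/
lemma exists_decomp (hσ : IsConjugation σ) (x : L) :
    ∃ a b, σ a = a ∧ σ b = b ∧ x = a + Complex.I • b := by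
  refine ⟨(2 : ℝ)⁻¹ • (x + σ x), (2 : ℝ)⁻¹ • (-(Complex.I • (x - σ x))), ?_, ?_, ?_⟩
  · rw [hσ.map_real_smul, hσ.map_add, hσ.invol, add_comm]
  · rw [hσ.map_real_smul, hσ.map_neg, hσ.map_I_smul, hσ.map_sub, hσ.invol, neg_neg, ← smul_neg,
      neg_sub]
  · rw [smul_comm Complex.I, ← smul_add, smul_neg, smul_smul, Complex.I_mul_I, neg_one_smul,
      neg_neg, add_add_sub_cancel, ← two_smul ℝ x, smul_smul]
    norm_num

/-- In a basis of the real form, `σ` conjugates coordinates. -/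
lemma repr_conj (hσ : IsConjugation σ) {ι : Type*} [Fintype ι] (b : Module.Basis ι ℂ L)
    (hb : ∀ i, σ (b i) = b i) (x : L) (i : ι) :
    b.repr (σ x) i = (starRingEnd ℂ) (b.repr x i) := by
  have h : σ x = ∑ j, (starRingEnd ℂ) (b.repr x j) • b j := by
    conv_lhs => rw [← b.sum_repr x]
    rw [hσ.map_sum]
    exact Finset.sum_congr rfl fun j _ => by rw [hσ.map_smul, hb]
  rw [h, b.repr_sum_self]

/-- The real form fixed by a conjugation, as a real vector space. -/
def fixed (hσ : IsConjugation σ) : Submodule ℝ L where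
  carrier := {x | σ x = x}
  add_mem' {x y} hx hy := by
    change σ (x + y) = x + y
    rw [hσ.map_add, hx, hy]
  zero_mem' := hσ.map_zero
  smul_mem' c x hx := by
    change σ (c • x) = c • x
    rw [hσ.map_real_smul, hx]

/-- Orthonormal bases of a real form: a symmetric real bilinear form that is positive definite on the
real form has an orthonormal basis there, which is also a complex basis of the whole algebra. -/
lemma exists_real_basis (hσ : IsConjugation σ) (B : L →ₗ[ℝ] L →ₗ[ℝ] ℝ)
    (hB : ∀ x y, B x y = B y x) (hpos : ∀ x, σ x = x → x ≠ 0 → 0 < B x x) :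
    ∃ (n : ℕ) (b : Module.Basis (Fin n) ℂ L), (∀ i, σ (b i) = b i) ∧
      ∀ i j, B (b i) (b j) = if i = j then 1 else 0 := by
  obtain ⟨w, hw⟩ := exists_orthonormal_basis
    (B.domRestrict₁₂ hσ.fixed hσ.fixed)
    (fun x y => hB x y) (fun x hx => hpos x x.2 (by simpa using hx))
  have hwf : ∀ i, σ (w i : L) = w i := fun i => (w i).2
  have hli : LinearIndependent ℂ (fun i => (w i : L)) := by
    have hre : LinearIndependent ℝ (fun i => (w i : L)) :=
      w.linearIndependent.map' hσ.fixed.subtype (Submodule.ker_subtype _)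
    have key : ∀ f : _ → ℂ, ∑ i, f i • (w i : L) = 0 → ∑ i, (f i).re • (w i : L) = 0 := by
      intro f hf
      have h2 : ∑ i, (starRingEnd ℂ) (f i) • (w i : L) = 0 := by
        have := congrArg σ hf
        rw [hσ.map_sum, hσ.map_zero] at this
        rw [← this]
        exact Finset.sum_congr rfl fun j _ => by rw [hσ.map_smul, hwf]
      have h3 : (2 : ℝ) • ∑ i, (f i).re • (w i : L) = 0 := by
        have h4 := congrArg₂ (· + ·) hf h2
        simp only [add_zero, ← Finset.sum_add_distrib] at h4
        rw [← h4, Finset.smul_sum]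
        refine Finset.sum_congr rfl fun i _ => ?_
        rw [← add_smul, Complex.add_conj, smul_smul, ← Complex.coe_smul]
      exact (smul_eq_zero.1 h3).resolve_left (by norm_num)
    rw [Fintype.linearIndependent_iff] at hre ⊢
    intro f hf i
    apply Complex.ext
    · exact hre _ (key f hf) i
    · have := hre _ (key (fun i => (-Complex.I) * f i) (by
        simp only [mul_smul, ← Finset.smul_sum, hf, smul_zero])) i
      simpa using this
  have hsp : ⊤ ≤ Submodule.span ℂ (Set.range fun i => (w i : L)) := by
    have hfix : ∀ a, σ a = a → a ∈ Submodule.span ℂ (Set.range fun i => (w i : L)) := by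
      intro a ha
      have := congrArg (Subtype.val) (w.sum_repr ⟨a, ha⟩)
      simp only [Submodule.coe_sum, Submodule.coe_smul] at this
      rw [← this]
      refine Submodule.sum_mem _ fun i _ => ?_
      rw [← Complex.coe_smul]
      exact Submodule.smul_mem _ _ (Submodule.subset_span ⟨i, rfl⟩)
    intro x _
    obtain ⟨a, b, ha, hb, rfl⟩ := hσ.exists_decomp x
    exact Submodule.add_mem _ (hfix a ha) (Submodule.smul_mem _ _ (hfix b hb))
  refine ⟨_, Module.Basis.mk hli hsp, ?_, ?_⟩
  · intro i
    simp [hwf]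
  · intro i j
    simp only [Module.Basis.mk_apply]
    exact hw i j

end IsConjugation

/-- A compact real form of a complex Lie algebra has a basis, orthonormal for the negative of
the Killing form, in which the structure constants are real, totally antisymmetric, and satisfy
the quadratic identity expressing the Killing form. -/
lemma compact_structure {τ : L → L} (hτ : IsCompactConjugation τ) :
    ∃ (n : ℕ) (u : Module.Basis (Fin n) ℂ L) (c : Fin n → Fin n → Fin n → ℝ),
      (∀ i, τ (u i) = u i) ∧ (∀ i j, ⁅u i, u j⁆ = ∑ k, c i j k • u k) ∧
      (∀ i j k, c i j k = -c k j i) ∧ (∀ i j k, c i j k = -c i k j) ∧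
      ∀ k l, ∑ i, ∑ j, c i j k * c i j l = if k = l then 1 else 0 := by
  obtain ⟨hc, hneg⟩ := hτ
  let B : L →ₗ[ℝ] L →ₗ[ℝ] ℝ := LinearMap.mk₂ ℝ (fun x y => -(killingForm ℂ L x y).re)
    (by intros; simp; ring) (by intro r x y; rw [← Complex.coe_smul]; simp)
    (by intros; simp; ring) (by intro r x y; rw [← Complex.coe_smul]; simp)
  have hBd : ∀ x y, B x y = -(killingForm ℂ L x y).re := fun _ _ => rfl
  have hsym : ∀ x y, killingForm ℂ L x y = killingForm ℂ L y x :=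
    fun x y => LieModule.traceForm_comm ℂ L L x y
  obtain ⟨n, u, hu, horth⟩ := hc.exists_real_basis B
    (fun x y => by rw [hBd, hBd, hsym]) (fun x h1 h2 => by
      rw [hBd]; linarith [(hneg x h1 h2).1])
  have him0 : ∀ x, τ x = x → (killingForm ℂ L x x).im = 0 := by
    intro x hx
    by_cases h : x = 0
    · simp [h]
    · exact (hneg x hx h).2
  have him : ∀ x y, τ x = x → τ y = y → (killingForm ℂ L x y).im = 0 := by
    intro x y hx hy
    have h := him0 (x + y) (by rw [hc.map_add, hx, hy])
    simp only [_root_.map_add, LinearMap.add_apply, Complex.add_im] at h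
    rw [him0 x hx, him0 y hy, hsym y x] at h
    linarith
  have hk : ∀ i j, killingForm ℂ L (u i) (u j) = if i = j then -1 else 0 := by
    intro i j
    apply Complex.ext
    · have := horth i j
      rw [hBd] at this
      split_ifs at this ⊢ <;> simp <;> linarith
    · rw [him _ _ (hu i) (hu j)]
      split_ifs <;> simp
  let c : Fin n → Fin n → Fin n → ℝ := fun i j k => -(killingForm ℂ L ⁅u i, u j⁆ (u k)).re
  have hrepr : ∀ x k, u.repr x k = - killingForm ℂ L x (u k) := by
    intro x k
    have h := congrArg (fun y => killingForm ℂ L y (u k)) (u.sum_repr x)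
    simp only [_root_.map_sum, LinearMap.sum_apply, LinearMap.map_smul, LinearMap.smul_apply, hk,
      smul_eq_mul, mul_ite, mul_neg, mul_one, mul_zero, Finset.sum_ite_eq', Finset.mem_univ,
      if_true] at h
    rw [← h, neg_neg]
  have hcr : ∀ i j k, u.repr ⁅u i, u j⁆ k = (c i j k : ℂ) := by
    intro i j k
    rw [hrepr]
    apply Complex.ext
    · simp [c]
    · rw [Complex.neg_im, him _ _ (by rw [hc.map_lie, hu, hu]) (hu k)]
      simp
  have hlie : ∀ x y z, killingForm ℂ L ⁅x, y⁆ z = killingForm ℂ L x ⁅y, z⁆ :=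
    fun x y z => LieModule.traceForm_apply_lie_apply ℂ L L x y z
  have hc1 : ∀ i j k, c i j k = -c k j i := by
    intro i j k
    simp only [c]
    rw [hlie, hsym, ← lie_skew (u j) (u k), LinearMap.map_neg, LinearMap.neg_apply, Complex.neg_re]
  have hc2 : ∀ i j k, c i j k = -c i k j := by
    intro i j k
    simp only [c]
    rw [← lie_skew (u i) (u j), LinearMap.map_neg, LinearMap.neg_apply, hlie, hsym]
    simp
  refine ⟨n, u, c, hu, ?_, hc1, hc2, ?_⟩
  · intro i j
    rw [← u.sum_repr ⁅u i, u j⁆]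
    exact Finset.sum_congr rfl fun k _ => by rw [hcr, Complex.coe_smul]
  · intro k l
    have h := hk k l
    rw [killingForm_apply_apply, LinearMap.trace_eq_matrix_trace ℂ u, LinearMap.toMatrix_comp u u u,
      Matrix.trace] at h
    simp only [Matrix.diag, Matrix.mul_apply, LinearMap.toMatrix_apply, LieAlgebra.ad_apply,
      hcr] at h
    have h2 : ∑ i, ∑ j, c k j i * c l i j = if k = l then -1 else 0 := by
      have := congrArg Complex.re h
      rw [apply_ite Complex.re] at this
      simpa [← Complex.ofReal_mul] using this
    have h3 : ∀ i j, c k j i * c l i j = -(c i j k * c i j l) := by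
      intro i j
      rw [hc1 k j i, hc2 l i j, hc1 l j i]
      ring
    simp only [h3, Finset.sum_neg_distrib] at h2
    split_ifs at h2 ⊢ <;> linarith

end Conjugations

/-! ### Matrices of `ad` and a compatible basis -/

section AdMatrices
variable {L : Type*} [LieRing L] [LieAlgebra ℂ L] [FiniteDimensional ℂ L]
variable {ι : Type*} [Fintype ι] [DecidableEq ι]

/-- The matrix of `ad x` in a basis. -/
noncomputable def adMat (b : Module.Basis ι ℂ L) (x : L) : Matrix ι ι ℂ :=
  LinearMap.toMatrix b b (LieAlgebra.ad ℂ L x)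

lemma adMat_apply (b : Module.Basis ι ℂ L) (x : L) (i j : ι) :
    adMat b x i j = b.repr ⁅x, b j⁆ i := by
  rw [adMat, LinearMap.toMatrix_apply, LieAlgebra.ad_apply]

lemma adMat_add (b : Module.Basis ι ℂ L) (x y : L) : adMat b (x + y) = adMat b x + adMat b y := by
  simp [adMat]

lemma adMat_sub (b : Module.Basis ι ℂ L) (x y : L) : adMat b (x - y) = adMat b x - adMat b y := by
  simp [adMat]

lemma adMat_smul (b : Module.Basis ι ℂ L) (c : ℂ) (x : L) : adMat b (c • x) = c • adMat b x := by
  simp [adMat]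

lemma adMat_neg (b : Module.Basis ι ℂ L) (x : L) : adMat b (-x) = -adMat b x := by
  simp [adMat]

lemma adMat_zero (b : Module.Basis ι ℂ L) : adMat b 0 = 0 := by
  simp [adMat]

lemma adMat_sum (b : Module.Basis ι ℂ L) {κ : Type*} (s : Finset κ) (f : κ → L) :
    adMat b (∑ k ∈ s, f k) = ∑ k ∈ s, adMat b (f k) := by
  simp [adMat]

lemma adMat_lie (b : Module.Basis ι ℂ L) (x y : L) :
    adMat b ⁅x, y⁆ = adMat b x * adMat b y - adMat b y * adMat b x := by
  rw [adMat, adMat, adMat, ← LinearMap.toMatrix_mul, ← LinearMap.toMatrix_mul, ← map_sub]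
  congr 1
  ext z
  simp

lemma killingForm_eq_trace (b : Module.Basis ι ℂ L) (x y : L) :
    killingForm ℂ L x y = trace (adMat b x * adMat b y) := by
  rw [killingForm_apply_apply, LinearMap.trace_eq_matrix_trace ℂ b, LinearMap.toMatrix_comp b b b]
  rfl

lemma adMat_injective [LieAlgebra.IsKilling ℂ L] (b : Module.Basis ι ℂ L) :
    Function.Injective (adMat b) := by
  intro x y h
  rw [← sub_eq_zero, ← adMat_sub] at h
  rw [← sub_eq_zero]
  have h2 : LieAlgebra.ad ℂ L (x - y) = 0 := (LinearMap.toMatrix b b).injective (by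
    rw [map_zero]; exact h)
  rw [← LieDerivation.IsKilling.ad_apply_eq_zero_iff ℂ L]
  ext z
  rw [LieDerivation.ad_apply_apply, LieDerivation.zero_apply]
  exact LinearMap.congr_fun h2 z

lemma adMat_conj {σ : L → L} (hσ : IsConjugation σ) (b : Module.Basis ι ℂ L)
    (hb : ∀ i, σ (b i) = b i) (x : L) :
    adMat b (σ x) = (adMat b x).map (starRingEnd ℂ) := by
  ext i j
  rw [Matrix.map_apply, adMat_apply, adMat_apply, ← hσ.repr_conj b hb, hσ.map_lie, hb]

end AdMatrices

section Compatible
variable {L L' : Type*} [LieRing L'] [LieAlgebra ℂ L'] [FiniteDimensional ℂ L']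
  [LieRing L] [LieAlgebra ℂ L] [FiniteDimensional ℂ L]

/-- Write `𝔨` and `𝔭` for the `±1`-eigenspaces of `τ` on the real form fixed by `σ`. There is a basis
of the real form fixed by `σ'` in which `ad (ε x)` is skew for `x ∈ 𝔨` and symmetric for `x ∈ 𝔭`. It
is orthonormal for a Hermitian inner product under which the compact form acts by skew operators, as
provided by the unitary trick. -/
lemma exists_compatible_basis (ε : L →ₗ⁅ℂ⁆ L') (σ τ : L → L)
    (hτ : IsCompactConjugation τ) (σ' : L' → L') (hσ' : IsConjugation σ')
    (hsub : ∀ x, σ x = x → σ' (ε x) = ε x) :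
    ∃ (n : ℕ) (b : Module.Basis (Fin n) ℂ L'), (∀ i, σ' (b i) = b i) ∧
      ∀ x, σ x = x → (τ x = x → (adMat b (ε x))ᵀ = -adMat b (ε x)) ∧
        (τ x = -x → (adMat b (ε x))ᵀ = adMat b (ε x)) := by
  obtain ⟨m, u, c, hu, huc, hc1, hc2, hcc⟩ := compact_structure hτ
  have hτc := hτ.1
  obtain ⟨B, hB, hBpos, hBinv⟩ := exists_invariant_form c hc1 hc2 hcc _
    (V := L') (fun i => (LieAlgebra.ad ℂ L' (ε (u i))).restrictScalars ℝ) rfl (by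
      intro i j x
      simp only [LinearMap.restrictScalars_apply, LieAlgebra.ad_apply]
      rw [← lie_lie, ← LieHom.map_lie, huc]
      have : ε (∑ k, c i j k • u k) = ∑ k, c i j k • ε (u k) := by
        rw [map_sum]
        refine Finset.sum_congr rfl fun k _ => ?_
        rw [← Complex.coe_smul, map_smul, Complex.coe_smul]
      rw [this, sum_lie]
      refine Finset.sum_congr rfl fun k _ => ?_
      rw [← Complex.coe_smul, smul_lie, Complex.coe_smul])
  -- Invariance passes from the basis vectors `u i` to all of the compact form.
  have hBk : ∀ k, τ k = k → ∀ y z, B ⁅ε k, y⁆ z = -B y ⁅ε k, z⁆ := by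
    intro k hk y z
    have hkr : ∀ i, u.repr k i = ((u.repr k i).re : ℂ) := fun i => by
      have := hτc.repr_conj u hu k i
      rw [hk] at this
      exact (Complex.conj_eq_iff_re.1 this.symm).symm
    have hl : ∀ y : L', ⁅ε k, y⁆ = ∑ i, (u.repr k i).re • ⁅ε (u i), y⁆ := by
      intro y
      conv_lhs => rw [← u.sum_repr k]
      rw [map_sum, sum_lie]
      refine Finset.sum_congr rfl fun i _ => ?_
      rw [hkr i, map_smul, smul_lie, Complex.coe_smul, Complex.ofReal_re]
    rw [hl, hl]
    simp only [map_sum, LinearMap.sum_apply, map_smul, LinearMap.smul_apply,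
      ← Finset.sum_neg_distrib]
    refine Finset.sum_congr rfl fun i _ => ?_
    rw [← smul_neg]
    congr 1
    exact hBinv i y z
  -- Averaging over multiplication by `I` makes the latter skew for `H`.
  let J : L' →ₗ[ℝ] L' := ((Complex.I • LinearMap.id : L' →ₗ[ℂ] L')).restrictScalars ℝ
  let H : L' →ₗ[ℝ] L' →ₗ[ℝ] ℝ := B + B.compl₁₂ J J
  have hH : ∀ x y, H x y = B x y + B (Complex.I • x) (Complex.I • y) := fun _ _ => rfl
  have hHk : ∀ k, τ k = k → ∀ y z, H ⁅ε k, y⁆ z = -H y ⁅ε k, z⁆ := by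
    intro k hk y z
    rw [hH, hH, ← lie_smul, ← lie_smul, hBk k hk, hBk k hk]
    ring
  have hHI : ∀ x y, H (Complex.I • x) y = -H x (Complex.I • y) := by
    intro x y
    rw [hH, hH, smul_smul, smul_smul, Complex.I_mul_I, neg_one_smul, neg_one_smul, map_neg, map_neg,
      LinearMap.neg_apply]
    ring
  -- If `τ k = -k` then `I k` lies in the compact form.
  have hHp : ∀ k, τ k = -k → ∀ y z, H ⁅ε k, y⁆ z = H y ⁅ε k, z⁆ := by
    intro k hk y z
    have h1 : τ (Complex.I • k) = Complex.I • k := by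
      rw [hτc.map_I_smul, hk, smul_neg, neg_neg]
    have h2 := hHk _ h1 y (Complex.I • z)
    rw [map_smul ε, smul_lie, smul_lie, lie_smul, smul_smul, Complex.I_mul_I, hHI, smul_smul,
      Complex.I_mul_I] at h2
    simpa only [neg_smul, one_smul, map_neg, neg_neg] using h2
  obtain ⟨n, b, hb, horth⟩ := hσ'.exists_real_basis H
    (fun x y => by rw [hH, hH, hB x y, hB (Complex.I • x)])
    (fun x _ hx => by
      rw [hH]
      exact add_pos (hBpos x hx) (hBpos _ (smul_ne_zero Complex.I_ne_zero hx)))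
  have hrepr : ∀ y, σ' y = y → ∀ i, b.repr y i = (H y (b i) : ℂ) := by
    intro y hy i
    have hr : ∀ i, b.repr y i = ((b.repr y i).re : ℂ) := fun i => by
      have := hσ'.repr_conj b hb y i
      rw [hy] at this
      exact (Complex.conj_eq_iff_re.1 this.symm).symm
    have h := congrArg (fun y => H y (b i)) (b.sum_repr y)
    have h2 : ∑ j, b.repr y j • b j = ∑ j, (b.repr y j).re • b j :=
      Finset.sum_congr rfl fun j _ => by
        conv_lhs => rw [hr j]
        rw [Complex.coe_smul]
    rw [h2] at h
    simp only [map_sum, LinearMap.sum_apply, LinearMap.map_smul, LinearMap.smul_apply, horth,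
      smul_eq_mul, mul_ite, mul_one, mul_zero, Finset.sum_ite_eq', Finset.mem_univ, if_true] at h
    rw [hr i, h]
  have hsymH : ∀ x y, H x y = H y x := fun x y => by rw [hH, hH, hB x y, hB (Complex.I • x)]
  have hent : ∀ x, σ x = x → ∀ i j, adMat b (ε x) i j = (H ⁅ε x, b j⁆ (b i) : ℂ) := by
    intro x hx i j
    rw [adMat_apply, hrepr _ (by rw [hσ'.map_lie, hsub x hx, hb])]
  refine ⟨n, b, hb, fun x hx => ⟨fun hxt => ?_, fun hxt => ?_⟩⟩
  · ext i j
    rw [transpose_apply, Matrix.neg_apply, hent x hx, hent x hx, hHk x hxt, hsymH]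
    simp
  · ext i j
    rw [transpose_apply, hent x hx, hent x hx, hHp x hxt, hsymH]

end Compatible

/-! ### Adapted bases -/

section Adapted
variable {L : Type*} [LieRing L] [LieAlgebra ℂ L] [FiniteDimensional ℂ L]
variable {ι : Type*} [Fintype ι] [DecidableEq ι]

/-- Complexification of real matrices. -/
noncomputable def cm : Matrix ι ι ℝ →+* Matrix ι ι ℂ := Complex.ofRealHom.mapMatrix

lemma cm_apply (A : Matrix ι ι ℝ) (i j : ι) : cm A i j = (A i j : ℂ) := rfl

lemma cm_injective : Function.Injective (cm : Matrix ι ι ℝ → Matrix ι ι ℂ) := by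
  intro A B h
  ext i j
  have := congrFun (congrFun h i) j
  rw [cm_apply, cm_apply] at this
  exact_mod_cast this

lemma cm_transpose (A : Matrix ι ι ℝ) : cm Aᵀ = (cm A)ᵀ := rfl

/-- The real part of the matrix of `ad x`; for `x` in a real form and a basis of that form this is
the matrix of `ad x` itself. -/
noncomputable def adRe (b : Module.Basis ι ℂ L) (x : L) : Matrix ι ι ℝ :=
  (adMat b x).map Complex.re

lemma cm_adRe {σ : L → L} (hσ : IsConjugation σ) (b : Module.Basis ι ℂ L)
    (hb : ∀ i, σ (b i) = b i) {x : L} (hx : σ x = x) : cm (adRe b x) = adMat b x := by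
  have h := adMat_conj hσ b hb x
  rw [hx] at h
  ext i j
  rw [cm_apply, adRe, Matrix.map_apply]
  have := congrFun (congrFun h i) j
  rw [Matrix.map_apply] at this
  exact Complex.conj_eq_iff_re.1 this.symm

/-- For a structure tensor `X_j = ad b_j`, the tuple `tw D X` consists of the `ad (D b_i)`. -/
lemma cm_tw {σ : L → L} (hσ : IsConjugation σ) (b : Module.Basis ι ℂ L)
    (hb : ∀ i, σ (b i) = b i) (D : Matrix ι ι ℝ) (i : ι) :
    cm (tw D (fun j => adRe b (b j)) i) = adMat b (Matrix.toLin b b (cm D) (b i)) := by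
  rw [Matrix.toLin_self, adMat_sum, tw, map_sum]
  refine Finset.sum_congr rfl fun j _ => ?_
  rw [adMat_smul, ← cm_adRe hσ b hb (hb j)]
  ext k l
  simp [cm_apply]

/-- Inner derivations are derivations, in matrix form. -/
lemma der_adRe {σ : L → L} (hσ : IsConjugation σ) (b : Module.Basis ι ℂ L)
    (hb : ∀ i, σ (b i) = b i) {x : L} (hx : σ x = x) :
    der (adRe b x) (fun j => adRe b (b j)) = 0 := by
  funext i
  apply cm_injective
  rw [der, map_sub, cm_tw hσ b hb, map_sub, map_mul, map_mul, cm_adRe hσ b hb hx,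
    cm_adRe hσ b hb (hb i), adMat, Matrix.toLin_toMatrix, LieAlgebra.ad_apply, ← adMat, adMat_lie,
    sub_self, Pi.zero_apply, map_zero]

/-- Every derivation is inner, in matrix form. -/
lemma exists_adMat_eq [LieAlgebra.IsKilling ℂ L] {σ : L → L} (hσ : IsConjugation σ)
    (b : Module.Basis ι ℂ L) (hb : ∀ i, σ (b i) = b i) (D : Matrix ι ι ℝ)
    (hD : der D (fun j => adRe b (b j)) = 0) : ∃ y, adMat b y = cm D := by
  set δ := Matrix.toLin b b (cm D) with hδ
  have h1 : ∀ i, cm D * adMat b (b i) - adMat b (b i) * cm D = adMat b (δ (b i)) := by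
    intro i
    have := congrArg cm (congrFun hD i)
    rw [der, map_sub, cm_tw hσ b hb, map_sub, map_mul, map_mul, cm_adRe hσ b hb (hb i),
      Pi.zero_apply, map_zero] at this
    exact sub_eq_zero.1 this
  have h2 : ∀ x, cm D * adMat b x - adMat b x * cm D = adMat b (δ x) := by
    intro x
    rw [← b.sum_repr x, map_sum, adMat_sum, adMat_sum, Finset.mul_sum, Finset.sum_mul,
      ← Finset.sum_sub_distrib]
    refine Finset.sum_congr rfl fun i _ => ?_
    rw [map_smul, adMat_smul, adMat_smul, ← h1, Matrix.mul_smul, Matrix.smul_mul, smul_sub]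
  have h3 : ∀ x y, δ ⁅x, y⁆ = ⁅x, δ y⁆ - ⁅y, δ x⁆ := by
    intro x y
    have h4 := congrArg (fun A => Matrix.toLin b b A y) (h2 x)
    simp only [map_sub, Matrix.toLin_mul b b b, adMat, Matrix.toLin_toMatrix, LinearMap.sub_apply,
      LinearMap.comp_apply, LieAlgebra.ad_apply, ← hδ] at h4
    rw [← lie_skew (δ x) y] at *
    rw [sub_eq_iff_eq_add.1 h4, add_comm, ← sub_eq_add_neg]
  obtain ⟨y, hy⟩ := LieDerivation.IsKilling.exists_eq_ad (R := ℂ) (L := L)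
    (LieDerivation.mk δ h3)
  refine ⟨y, ?_⟩
  rw [adMat, ← LinearMap.toMatrix_toLin b b (cm D)]
  congr 1
  ext z
  have := congrArg (fun F : LieDerivation ℂ L L => F z) hy
  simpa using this

/-- There are no nonzero abelian ideals, in matrix form: `h1` says that the range of `g` is an ideal,
and `h2` that it is abelian. -/
lemma eq_zero_of_abelian [LieAlgebra.HasTrivialRadical ℂ L] {σ : L → L} (hσ : IsConjugation σ)
    (b : Module.Basis ι ℂ L) (hb : ∀ i, σ (b i) = b i) (g : Matrix ι ι ℝ)
    (h1 : ∀ i v, ∃ w, g *ᵥ w = adRe b (b i) *ᵥ (g *ᵥ v))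
    (h2 : ∀ i, tw g (fun j => adRe b (b j)) i * g = 0) : g = 0 := by
  have hW : ∀ i, ∃ W : Matrix ι ι ℝ, g * W = adRe b (b i) * g := by
    intro i
    choose w hw using fun k => h1 i (Pi.single k 1)
    refine ⟨(Matrix.of w)ᵀ, ?_⟩
    ext j k
    have := congrFun (hw k) j
    rw [Matrix.mulVec_mulVec, Matrix.mulVec_single_one] at this
    exact this
  choose W hW using hW
  set G := Matrix.toLin b b (cm g) with hG
  have hr : ∀ i v, ⁅b i, G v⁆ = G (Matrix.toLin b b (cm (W i)) v) := by
    intro i v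
    have := congrArg (fun A => Matrix.toLin b b (cm A) v) (hW i)
    simp only [map_mul, Matrix.toLin_mul b b b, LinearMap.comp_apply, cm_adRe hσ b hb (hb i),
      adMat, Matrix.toLin_toMatrix, LieAlgebra.ad_apply] at this
    exact this.symm
  have hz : ∀ i v, ⁅G (b i), G v⁆ = 0 := by
    intro i v
    have := congrArg (fun A => Matrix.toLin b b (cm A) v) (h2 i)
    simp only [map_mul, Matrix.toLin_mul b b b, LinearMap.comp_apply, cm_tw hσ b hb,
      adMat, Matrix.toLin_toMatrix, LieAlgebra.ad_apply, map_zero, LinearMap.zero_apply] at this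
    exact this
  have hz2 : ∀ u v, ⁅G u, G v⁆ = 0 := by
    intro u v
    rw [← b.sum_repr u, map_sum, sum_lie]
    refine Finset.sum_eq_zero fun i _ => ?_
    rw [map_smul, smul_lie, hz, smul_zero]
  let J : LieIdeal ℂ L :=
    { LinearMap.range G with
      lie_mem := by
        rintro x _ ⟨v, rfl⟩
        change ⁅x, G v⁆ ∈ LinearMap.range G
        rw [← b.sum_repr x, sum_lie]
        refine Submodule.sum_mem _ fun i _ => ?_
        rw [smul_lie, hr]
        exact Submodule.smul_mem _ _ ⟨_, rfl⟩ }
  have hJ : J = ⊥ := by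
    refine (LieAlgebra.hasTrivialRadical_iff_no_abelian_ideals ℂ L).1 inferInstance J ?_
    refine ⟨?_⟩
    rintro ⟨_, u, rfl⟩ ⟨_, v, rfl⟩
    exact Subtype.ext (hz2 u v)
  have hG0 : G = 0 := by
    ext v
    have : G v ∈ J := ⟨v, rfl⟩
    rw [hJ] at this
    simpa using this
  apply cm_injective
  rw [map_zero]
  exact (Matrix.toLin b b).injective (by rw [map_zero]; exact hG0)

/-- The basis `b` of the real form can be changed without changing the matrices of `ad x`, `x ∈ T`,
so that the transpose of each `ad x` with `x` in the real form becomes of the form `ad y`. Here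
`ad x`, `x ∈ T`, is required to be symmetric or skew in the basis `b`. -/
lemma exists_adapted_basis [LieAlgebra.HasTrivialRadical ℂ L] {σ : L → L} (hσ : IsConjugation σ)
    (b : Module.Basis ι ℂ L) (hb : ∀ i, σ (b i) = b i) (T : Set L)
    (hT : ∀ x ∈ T, σ x = x ∧ ((adMat b x)ᵀ = adMat b x ∨ (adMat b x)ᵀ = -adMat b x)) :
    ∃ b' : Module.Basis ι ℂ L, (∀ i, σ (b' i) = b' i) ∧ (∀ x ∈ T, adMat b' x = adMat b x) ∧
      ∀ x, σ x = x → ∃ y, adMat b' y = (adMat b' x)ᵀ := by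
  obtain ⟨g, hg, hgS, hgD⟩ := exists_derivation_adjoint (fun j => adRe b (b j)) (adRe b '' T)
    (by
      rintro _ ⟨x, hx, rfl⟩
      obtain ⟨h1, h2⟩ := hT x hx
      rw [← cm_adRe hσ b hb h1, ← cm_transpose, ← map_neg] at h2
      exact h2.imp (fun h => cm_injective h) (fun h => cm_injective h))
    (by
      rintro _ ⟨x, hx, rfl⟩
      exact der_adRe hσ b hb (hT x hx).1)
    (fun i => der_adRe hσ b hb (hb i))
    (fun g₀ h1 h2 => eq_zero_of_abelian hσ b hb g₀ h1 h2)
  have hgu : IsUnit g.det := by rw [hg]; exact isUnit_one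
  have hgi : cm g * cm g⁻¹ = 1 := by rw [← map_mul, Matrix.mul_nonsing_inv g hgu, map_one]
  have hgi' : cm g⁻¹ * cm g = 1 := by rw [← map_mul, Matrix.nonsing_inv_mul g hgu, map_one]
  let e : L ≃ₗ[ℂ] L := LinearEquiv.ofLinearMap (Matrix.toLin b b (cm g)) (Matrix.toLin b b (cm g⁻¹))
    (by rw [← Matrix.toLin_mul, hgi, Matrix.toLin_one])
    (by rw [← Matrix.toLin_mul, hgi', Matrix.toLin_one])
  have hb' : ∀ x, adMat (b.map e) x = cm g⁻¹ * adMat b x * cm g := by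
    intro x
    rw [← LinearMap.toMatrix_toLin b b (cm g⁻¹), ← LinearMap.toMatrix_toLin b b (cm g), adMat, adMat,
      ← LinearMap.toMatrix_comp, ← LinearMap.toMatrix_comp]
    ext i j
    rw [LinearMap.toMatrix_apply, LinearMap.toMatrix_apply, Module.Basis.map_repr,
      Module.Basis.map_apply]
    rfl
  refine ⟨b.map e, ?_, ?_, ?_⟩
  · intro i
    have : b.map e i = ∑ j, (g j i : ℂ) • b j := by
      rw [Module.Basis.map_apply]
      exact Matrix.toLin_self b b (cm g) i
    rw [this, hσ.map_sum]
    refine Finset.sum_congr rfl fun j _ => ?_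
    rw [hσ.map_smul, hb, Complex.conj_ofReal]
  · intro x hx
    have h := congrArg cm (hgS _ ⟨x, hx, rfl⟩)
    rw [map_mul, map_mul, cm_adRe hσ b hb (hT x hx).1] at h
    rw [hb', Matrix.mul_assoc, h, ← Matrix.mul_assoc, hgi', Matrix.one_mul]
  · intro x hx
    obtain ⟨y, hy⟩ := exists_adMat_eq hσ b hb _ (hgD _ (der_adRe hσ b hb hx))
    refine ⟨y, ?_⟩
    rw [hb', hb', hy, map_mul, map_mul, cm_transpose, map_mul, map_mul, cm_adRe hσ b hb hx]
    rw [Matrix.mul_assoc, Matrix.mul_assoc, hgi', Matrix.mul_one, ← Matrix.mul_assoc, hgi',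
      Matrix.one_mul]

end Adapted

end Preparation

/-! ### The compact form -/

section Trace
open Matrix
variable {ι : Type*} [Fintype ι] [DecidableEq ι]

lemma trace_mul_conjTranspose_re_pos {X : Matrix ι ι ℂ} (hX : X ≠ 0) :
    0 < (trace (X * Xᴴ)).re ∧ (trace (X * Xᴴ)).im = 0 := by
  have h : trace (X * Xᴴ) = ((∑ i, ∑ j, Complex.normSq (X i j) : ℝ) : ℂ) := by
    simp only [trace, Matrix.diag, Matrix.mul_apply, conjTranspose_apply, Complex.ofReal_sum]
    exact Finset.sum_congr rfl fun i _ => Finset.sum_congr rfl fun j _ => Complex.mul_conj _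
  rw [h, Complex.ofReal_re, Complex.ofReal_im]
  refine ⟨?_, rfl⟩
  obtain ⟨i, j, hij⟩ : ∃ i j, X i j ≠ 0 := by
    by_contra! hc
    exact hX (Matrix.ext hc)
  refine Finset.sum_pos' (fun i _ => Finset.sum_nonneg fun j _ => Complex.normSq_nonneg _)
    ⟨i, Finset.mem_univ _, ?_⟩
  exact Finset.sum_pos' (fun j _ => Complex.normSq_nonneg _)
    ⟨j, Finset.mem_univ _, Complex.normSq_pos.2 hij⟩

/-- If the set of matrices of `ad x`, `x` in a real form, is closed under transposition, then minus the
transpose is a Cartan involution `θ` of the real form, extended to the complex algebra. On matrices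
the conjugation `σ θ` is `M ↦ -Mᴴ`, so that positivity reduces to `tr (M Mᴴ) > 0` for `M ≠ 0`. -/
lemma exists_compact_of_transpose {L : Type*} [LieRing L] [LieAlgebra ℂ L] [FiniteDimensional ℂ L]
    [LieAlgebra.IsKilling ℂ L] {σ : L → L} (hσ : IsConjugation σ) (b : Module.Basis ι ℂ L)
    (hb : ∀ i, σ (b i) = b i) (hT : ∀ x, σ x = x → ∃ y, adMat b y = (adMat b x)ᵀ) :
    ∃ θ : L →ₗ[ℂ] L, (∀ x, adMat b (θ x) = -(adMat b x)ᵀ) ∧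
      IsCompactConjugation (fun x => σ (θ x)) ∧ (∀ x y : L, θ ⁅x, y⁆ = ⁅θ x, θ y⁆) ∧
      (∀ x, θ (θ x) = x) ∧ (∀ x, θ (σ x) = σ (θ x)) ∧
      (∀ x, σ x = x → x ≠ 0 →
        0 < (- killingForm ℂ L x (θ x)).re ∧ (killingForm ℂ L x (θ x)).im = 0) := by
  have hinj := adMat_injective b
  have hz : ∀ x, ∃ y, adMat b y = -(adMat b x)ᵀ := by
    intro x
    obtain ⟨a, c, ha, hc, rfl⟩ := hσ.exists_decomp x
    obtain ⟨y, hy⟩ := hT a ha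
    obtain ⟨z, hz⟩ := hT c hc
    refine ⟨-(y + Complex.I • z), ?_⟩
    rw [adMat_neg, adMat_add, adMat_smul, hy, hz, adMat_add, adMat_smul, transpose_add,
      transpose_smul]
  -- The matrix determines the element, so `Θ` inherits its algebraic properties from
  -- `M ↦ -Mᵀ`.
  choose Θ hΘ using hz
  let θ : L →ₗ[ℂ] L :=
    { toFun := Θ
      map_add' := fun x y => hinj (by
        rw [adMat_add, hΘ, hΘ, hΘ, adMat_add, transpose_add, neg_add])
      map_smul' := fun c x => hinj (by
        rw [RingHom.id_apply, adMat_smul, hΘ, hΘ, adMat_smul, transpose_smul, smul_neg]) }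
  have hθ : ∀ x, adMat b (θ x) = -(adMat b x)ᵀ := hΘ
  have hlie : ∀ x y : L, θ ⁅x, y⁆ = ⁅θ x, θ y⁆ := fun x y => hinj (by
    rw [hθ, adMat_lie, adMat_lie, hθ, hθ, transpose_sub, transpose_mul, transpose_mul, neg_mul_neg,
      neg_mul_neg, neg_sub])
  have hinv : ∀ x, θ (θ x) = x := fun x => hinj (by
    rw [hθ, hθ, transpose_neg, transpose_transpose, neg_neg])
  have hcomm : ∀ x, θ (σ x) = σ (θ x) := fun x => hinj (by
    rw [hθ, adMat_conj hσ b hb, adMat_conj hσ b hb, hθ]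
    ext i j
    simp)
  have hτM : ∀ x, adMat b (σ (θ x)) = -(adMat b x)ᴴ := by
    intro x
    rw [adMat_conj hσ b hb, hθ]
    ext i j
    simp
  have h0 : ∀ x, x ≠ 0 → adMat b x ≠ 0 := fun x hx h => hx (hinj (by rw [h, adMat_zero]))
  refine ⟨θ, hθ, ⟨⟨?_, ?_, ?_, ?_⟩, ?_⟩, hlie, hinv, hcomm, ?_⟩
  · intro x y
    rw [map_add, hσ.map_add]
  · intro c x
    rw [map_smul, hσ.map_smul]
  · intro x y
    rw [hlie, hσ.map_lie]
  · intro x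
    rw [hcomm, hσ.invol, hinv]
  · intro x hx hx0
    have hk : killingForm ℂ L x x = -trace (adMat b x * (adMat b x)ᴴ) := by
      have h1 := hτM x
      rw [show σ (θ x) = x from hx] at h1
      rw [killingForm_eq_trace b]
      rw [← trace_neg, ← Matrix.mul_neg, ← h1]
    have := trace_mul_conjTranspose_re_pos (h0 x hx0)
    rw [hk, Complex.neg_re, Complex.neg_im, this.2]
    exact ⟨neg_neg_of_pos this.1, neg_zero⟩
  · intro x hx hx0
    have hk : killingForm ℂ L x (θ x) = -trace (adMat b x * (adMat b x)ᴴ) := by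
      have h1 := hτM x
      rw [← hcomm, hx] at h1
      rw [killingForm_eq_trace b, h1, mul_neg, trace_neg]
    have := trace_mul_conjTranspose_re_pos (h0 x hx0)
    rw [hk, neg_neg, Complex.neg_im, this.2]
    exact ⟨this.1, neg_zero⟩

end Trace

theorem exists_compatible_compact_form_and_involution
    {L L' : Type*} [LieRing L] [LieAlgebra ℂ L] [FiniteDimensional ℂ L]
    [LieAlgebra.IsSemisimple ℂ L]
    [LieRing L'] [LieAlgebra ℂ L'] [FiniteDimensional ℂ L'] [LieAlgebra.IsSemisimple ℂ L']
    (ε : L →ₗ⁅ℂ⁆ L') (hε : Function.Injective ε)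
    -- 𝔤 is the real form of 𝔤ᶜ fixed by σ, 𝔲 the compact form fixed by τ, with στ = τσ:
    (σ τ : L → L) (hσ : IsConjugation σ) (hτ : IsCompactConjugation τ)
    (hcomm : ∀ x, σ (τ x) = τ (σ x))
    -- 𝔤̃ is a real form of 𝔤̃ᶜ, fixed by the conjugation σ', with ε(𝔤) ⊆ 𝔤̃:
    (σ' : L' → L') (hσ' : IsConjugation σ')
    (hsub : ∀ x, σ x = x → σ' (ε x) = ε x) :
    ∃ (τ' : L' → L') (θ' : L' →ₗ[ℂ] L'),
      IsCompactConjugation τ' ∧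
      (∀ x y : L', θ' ⁅x, y⁆ = ⁅θ' x, θ' y⁆) ∧ (∀ x, θ' (θ' x) = x) ∧
      -- (1) ε(𝔲) ⊆ 𝔲̃:
      (∀ x, τ x = x → τ' (ε x) = ε x) ∧
      -- (2) ε ∘ θ = θ̃ ∘ ε  (where θ = σ ∘ τ):
      (∀ x, ε (σ (τ x)) = θ' (ε x)) ∧
      -- (3) θ̃ ∘ τ̃ = τ̃ ∘ θ̃:
      (∀ x, θ' (τ' x) = τ' (θ' x)) ∧
      -- (4) θ̃ restricts to a Cartan involution of 𝔤̃ for a Cartan decomposition 𝔤̃ = 𝔨̃ ⊕ 𝔭̃,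
      -- and 𝔲̃ = 𝔨̃ ⊕ i𝔭̃:
      (∀ x, σ' x = x → σ' (θ' x) = θ' x) ∧
      (∀ x, σ' x = x → x ≠ 0 →
        0 < (- killingForm ℂ L' x (θ' x)).re ∧ (killingForm ℂ L' x (θ' x)).im = 0) ∧
      (∀ z : L', τ' z = z ↔ ∃ k p : L',
        σ' k = k ∧ θ' k = k ∧ σ' p = p ∧ θ' p = -p ∧ z = k + Complex.I • p) := by
  obtain ⟨n, b₀, hb₀, hb₀T⟩ := exists_compatible_basis ε σ τ hτ σ' hσ' hsub
  have hτc := hτ.1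
  -- The set `T` is `ε(𝔨) ∪ ε(𝔭)`, where `𝔤 = 𝔨 ⊕ 𝔭` is the eigenspace decomposition for `τ`.
  obtain ⟨b, hb, hbT, htr⟩ := exists_adapted_basis hσ' b₀ hb₀
    {y | ∃ x, σ x = x ∧ (τ x = x ∨ τ x = -x) ∧ y = ε x} (by
      rintro _ ⟨x, hx, h, rfl⟩
      exact ⟨hsub x hx, h.elim (fun h => Or.inr ((hb₀T x hx).1 h))
        (fun h => Or.inl ((hb₀T x hx).2 h))⟩)
  obtain ⟨θ', hθM, hcpt, hlie, hinv, hcm, hpos⟩ := exists_compact_of_transpose hσ' b hb htr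
  have hinj := adMat_injective b
  have hk : ∀ x, σ x = x → τ x = x → θ' (ε x) = ε x := by
    intro x hx ht
    apply hinj
    rw [hθM, hbT _ ⟨x, hx, Or.inl ht, rfl⟩, (hb₀T x hx).1 ht, neg_neg]
  have hp : ∀ x, σ x = x → τ x = -x → θ' (ε x) = -ε x := by
    intro x hx ht
    apply hinj
    rw [hθM, adMat_neg, hbT _ ⟨x, hx, Or.inr ht, rfl⟩, (hb₀T x hx).2 ht]
  -- The conjugations `σ` and `σ'` agree along `ε`, as both are conjugate-linear.
  have hσε : ∀ x, σ' (ε x) = ε (σ x) := by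
    intro x
    obtain ⟨a, c, ha, hc, rfl⟩ := hσ.exists_decomp x
    rw [map_add, map_smul, hσ'.map_add, hσ'.map_I_smul, hsub a ha, hsub c hc, hσ.map_add,
      hσ.map_I_smul, ha, hc, map_add, map_neg, map_smul]
  -- On `𝔤` the involution `θ` is `τ`, and elements of `𝔤` split into `τ`-eigenvectors.
  have hreal : ∀ x, σ x = x → θ' (ε x) = ε (τ x) := by
    intro x hx
    have hd : x = (2 : ℂ)⁻¹ • (x + τ x) + (2 : ℂ)⁻¹ • (x - τ x) := by
      rw [← smul_add, add_add_sub_cancel, ← two_smul ℂ x, smul_smul, inv_mul_cancel₀ two_ne_zero,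
        one_smul]
    have h1 := hk (x + τ x) (by rw [hσ.map_add, hcomm, hx]) (by
      rw [hτc.map_add, hτc.invol, add_comm])
    have h2 := hp (x - τ x) (by rw [hσ.map_sub, hcomm, hx]) (by
      rw [hτc.map_sub, hτc.invol, neg_sub])
    conv_lhs => rw [hd]
    rw [map_add, map_smul, map_smul, map_add, map_smul, map_smul, h1, h2, ← map_neg, ← map_smul,
      ← map_smul, ← map_add, neg_sub]
    congr 1
    module
  have h2 : ∀ x, ε (σ (τ x)) = θ' (ε x) := by
    intro x
    obtain ⟨a, c, ha, hc, rfl⟩ := hσ.exists_decomp x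
    rw [map_add ε, map_add θ', map_smul ε, map_smul θ', hreal a ha, hreal c hc, hτc.map_add,
      hσ.map_add, hτc.map_I_smul, hσ.map_neg, hσ.map_I_smul, neg_neg, hcomm, hcomm, ha, hc, map_add,
      map_smul]
  refine ⟨fun x => σ' (θ' x), θ', hcpt, hlie, hinv, ?_, h2, ?_, ?_, hpos, ?_⟩
  · intro x hx
    change σ' (θ' (ε x)) = ε x
    rw [← h2, hσε, hσ.invol, hx]
  · intro x
    exact hcm _
  · intro x hx
    rw [← hcm, hx]
  · intro z
    constructor
    · intro hz
      have hz1 : σ' (θ' z) = z := hz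
      have hz2 : σ' z = θ' z := by
        conv_lhs => rw [← hz1]
        rw [hσ'.invol]
      -- On the fixed points of `τ' = σ' θ'` one has `σ' = θ'`, so the `θ'`-eigencomponents of `z` are the
      -- real and imaginary parts of `z`.
      refine ⟨(2 : ℝ)⁻¹ • (z + θ' z), (2 : ℝ)⁻¹ • -(Complex.I • (z - θ' z)), ?_, ?_, ?_, ?_, ?_⟩
      · rw [hσ'.map_real_smul, hσ'.map_add, hz1, hz2, add_comm]
      · rw [← Complex.coe_smul, map_smul, map_add, hinv, add_comm]
      · rw [hσ'.map_real_smul, hσ'.map_neg, hσ'.map_I_smul, hσ'.map_sub, hz1, hz2, neg_neg,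
          ← smul_neg, neg_sub]
      · rw [← Complex.coe_smul, map_smul, map_neg, map_smul, map_sub, hinv, ← neg_sub z]
        simp only [smul_neg, neg_neg]
      · rw [smul_comm Complex.I, smul_neg, smul_smul, Complex.I_mul_I, neg_one_smul, neg_neg,
          ← smul_add, add_add_sub_cancel, ← two_smul ℝ z, smul_smul]
        norm_num
    · rintro ⟨k, p, hk1, hk2, hp1, hp2, rfl⟩
      change σ' (θ' _) = _
      rw [map_add, map_smul, hk2, hp2, hσ'.map_add, hk1, hσ'.map_I_smul, hσ'.map_neg, hp1, smul_neg,
        neg_neg]
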